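/- arXiv:2601.17579 — 2 statements merged into one kernel-verified Lean document; each statement's English description precedes it below -/
import Mathlib

section
/- (Fractional Poincaré inequality.) Let d ≥ 1, s ∈ (0,1), and let Ω ⊂ ℝ^d be open and bounded. Then there exists a constant C > 0, depending only on d, s and Ω, such that for every u ∈ C_c^∞(Ω): ‖u‖_{L²(Ω)} ≤ C ‖∇^s u‖_{L²(ℝ^d; ℝ^d)}. -/
open MeasureTheory Filter Topology

noncomputable section

/-- The normalising constant `μ_s` of the Riesz fractional operators. -/
def muS (d : ℕ) (s : ℝ) : ℝ :=
  2 ^ s * Real.pi ^ (-(d : ℝ) / 2) * Real.Gamma (((d : ℝ) + s + 1) / 2) /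
    Real.Gamma ((1 - s) / 2)

/-- The Riesz fractional gradient `∇^s u (x)`. -/
def fracGrad (d : ℕ) (s : ℝ) (u : EuclideanSpace ℝ (Fin d) → ℝ)
    (x : EuclideanSpace ℝ (Fin d)) : EuclideanSpace ℝ (Fin d) :=
  muS d s • ∫ y, (‖x - y‖ ^ ((d : ℝ) + s + 1))⁻¹ • ((u x - u y) • (x - y))

section aux

set_option linter.unusedSectionVars false

open scoped FourierTransform RealInnerProductSpace

lemma integrable_weight (d : ℕ) (hd : 1 ≤ d) (s : ℝ) (hs : s ∈ Set.Ioo (0 : ℝ) 1) :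
    Integrable (fun z : EuclideanSpace ℝ (Fin d) => min 1 ‖z‖ * (‖z‖ ^ ((d : ℝ) + s))⁻¹) := by
  obtain ⟨hs0, hs1⟩ := hs
  have : Nonempty (Fin d) := ⟨⟨0, hd⟩⟩
  have : Nontrivial (EuclideanSpace ℝ (Fin d)) := inferInstance
  rw [integrable_fun_norm_addHaar volume (f := fun r : ℝ => min 1 r * (r ^ ((d : ℝ) + s))⁻¹)]
  have key : ∀ r : ℝ, 0 < r → r ^ (d - 1) * (r ^ ((d : ℝ) + s))⁻¹ = r ^ (-1 - s) := by
    intro r hr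
    rw [← Real.rpow_neg hr.le, ← Real.rpow_natCast, ← Real.rpow_add hr]
    congr 1
    push_cast [Nat.cast_sub hd]
    ring
  rw [← Set.Ioc_union_Ioi_eq_Ioi (zero_le_one (α := ℝ)), integrableOn_union]
  constructor
  · have h1 : IntegrableOn (fun r : ℝ => r ^ (-s)) (Set.Ioc 0 1) := by
      rw [← intervalIntegrable_iff_integrableOn_Ioc_of_le zero_le_one]
      exact intervalIntegral.intervalIntegrable_rpow' (by linarith)
    refine h1.congr_fun (fun r hr => ?_) measurableSet_Ioc
    simp only [finrank_euclideanSpace, Fintype.card_fin, smul_eq_mul]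
    rw [min_eq_right hr.2, mul_left_comm, key r hr.1, ← Real.rpow_one_add' hr.1.le (by linarith)]
    congr 1; ring
  · have h1 : IntegrableOn (fun r : ℝ => r ^ (-1 - s)) (Set.Ioi 1) :=
      integrableOn_Ioi_rpow_of_lt (by linarith) one_pos
    refine h1.congr_fun (fun r hr => ?_) measurableSet_Ioi
    have hr : 1 < r := hr
    simp only [finrank_euclideanSpace, Fintype.card_fin, smul_eq_mul]
    rw [min_eq_left hr.le, mul_left_comm, key r (by linarith), one_mul]

variable {E : Type*} [NormedAddCommGroup E] [InnerProductSpace ℝ E] [FiniteDimensional ℝ E]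
  [MeasurableSpace E] [BorelSpace E]

lemma diff_bound {U : E → ℂ} (hU : ContDiff ℝ (⊤ : ℕ∞) U) (hc : HasCompactSupport U) :
    ∃ A : ℝ, 0 ≤ A ∧ ∀ x z, ‖U x - U (x - z)‖ ≤ A * min 1 ‖z‖ *
      ((tsupport U).indicator (fun _ => (1 : ℝ)) x +
        (tsupport U).indicator (fun _ => (1 : ℝ)) (x - z)) := by
  obtain ⟨L, hL⟩ := ContDiff.lipschitzWith_of_hasCompactSupport hc hU (by simp)
  obtain ⟨M, hM⟩ := hc.exists_bound_of_continuous hU.continuous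
  have hM0 : 0 ≤ M := (norm_nonneg _).trans (hM 0)
  refine ⟨L + 2 * M, by positivity, fun x z => ?_⟩
  have h1 : ‖U x - U (x - z)‖ ≤ L * ‖z‖ := by
    have := hL.dist_le_mul x (x - z)
    rwa [dist_eq_norm, dist_eq_norm, sub_sub_cancel] at this
  have h2 : ‖U x - U (x - z)‖ ≤ 2 * M := by
    refine (norm_sub_le _ _).trans ?_
    linarith [hM x, hM (x - z)]
  have hL0 : (0 : ℝ) ≤ L := L.2
  have h3 : ‖U x - U (x - z)‖ ≤ (L + 2 * M) * min 1 ‖z‖ := by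
    rcases le_total 1 ‖z‖ with h | h
    · rw [min_eq_left h]; linarith
    · rw [min_eq_right h]; nlinarith [norm_nonneg z]
  have h4 : 0 ≤ (L + 2 * M) * min 1 ‖z‖ := by positivity
  by_cases hx : x ∈ tsupport U
  · by_cases hz : x - z ∈ tsupport U <;> simp only [hx, hz, Set.indicator_of_mem,
      Set.indicator_of_notMem, not_false_eq_true] <;> linarith
  · by_cases hz : x - z ∈ tsupport U
    · simp only [hx, hz, Set.indicator_of_mem,
      Set.indicator_of_notMem, not_false_eq_true]; linarith
    · simp [hx, hz, image_eq_zero_of_notMem_tsupport]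

/-- the singular integral operator with kernel `K`. -/
def singOp (K : E → ℝ) (U : E → ℂ) (x : E) : ℂ := ∫ z, (U x - U (x - z)) * (K z : ℂ)

/-- its symbol -/
def symb (K : E → ℝ) (ξ : E) : ℂ := ∫ z, (1 - (Real.fourierChar (-⟪z, ξ⟫) : ℂ)) * (K z : ℂ)

lemma pre_bound {U : E → ℂ} {A : ℝ} (hA : 0 ≤ A) (h : ∀ x z, ‖U x - U (x - z)‖ ≤ A * min 1 ‖z‖ *
      ((tsupport U).indicator (fun _ => (1 : ℝ)) x +
        (tsupport U).indicator (fun _ => (1 : ℝ)) (x - z))) (K : E → ℝ) (x z : E) :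
    ‖(U x - U (x - z)) * (K z : ℂ)‖ ≤ 2 * A * ‖min 1 ‖z‖ * K z‖ := by
  have h1 : ∀ y : E, (tsupport U).indicator (fun _ => (1 : ℝ)) y ≤ 1 := fun y =>
    Set.indicator_le_self' (fun _ _ => zero_le_one) y
  rw [norm_mul, norm_mul, Complex.norm_real, Real.norm_of_nonneg (by positivity : 0 ≤ min 1 ‖z‖),
    ← mul_assoc]
  gcongr
  refine (h x z).trans ?_
  have : 0 ≤ A * min 1 ‖z‖ := by positivity
  nlinarith [h1 x, h1 (x - z)]

lemma prod_integrable {U : E → ℂ} (hU : ContDiff ℝ (⊤ : ℕ∞) U) (hc : HasCompactSupport U)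
    {K : E → ℝ} (hKm : Measurable K) (hK : Integrable (fun z => min 1 ‖z‖ * K z)) :
    Integrable (fun p : E × E => (U p.1 - U (p.1 - p.2)) * (K p.2 : ℂ))
      (volume.prod volume) := by
  obtain ⟨A, hA, hb⟩ := diff_bound hU hc
  have hI : Integrable ((tsupport U).indicator (fun _ => (1 : ℝ))) := by
    rw [integrable_indicator_iff (isClosed_tsupport U).measurableSet]
    exact integrableOn_const (hc.isCompact.measure_lt_top.ne)
  have h1 := hI.mul_prod hK.norm
  have h2 := hK.norm.convolution_integrand (ContinuousLinearMap.mul ℝ ℝ) hI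
  refine ((h1.add h2).const_mul A).mono' ?_ (ae_of_all _ fun p => ?_)
  · have := hU.continuous
    refine AEStronglyMeasurable.mul ?_ ?_
    · exact Continuous.aestronglyMeasurable (by fun_prop)
    · exact (Complex.measurable_ofReal.comp (hKm.comp measurable_snd)).aestronglyMeasurable
  · have := hb p.1 p.2
    rw [norm_mul, Complex.norm_real]
    simp only [Pi.add_apply, ContinuousLinearMap.mul_apply', norm_mul]
    rw [Real.norm_of_nonneg (by positivity : 0 ≤ min 1 ‖p.2‖)]
    calc _ ≤ _ := mul_le_mul_of_nonneg_right this (norm_nonneg (K p.2))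
      _ = _ := by ring

lemma singOp_continuous {U : E → ℂ} (hU : ContDiff ℝ (⊤ : ℕ∞) U) (hc : HasCompactSupport U)
    {K : E → ℝ} (hKm : Measurable K) (hK : Integrable (fun z => min 1 ‖z‖ * K z)) :
    Continuous (singOp K U) := by
  obtain ⟨A, hA, hb⟩ := diff_bound hU hc
  have hUc := hU.continuous
  refine continuous_of_dominated (fun x => ?_) (fun x => ae_of_all _ fun z => pre_bound hA hb K x z)
    (hK.norm.const_mul (2 * A)) (ae_of_all _ fun z => by fun_prop)
  exact AEStronglyMeasurable.mul (Continuous.aestronglyMeasurable (by fun_prop))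
    (Complex.measurable_ofReal.comp hKm).aestronglyMeasurable

lemma singOp_integrand {U : E → ℂ} (hU : ContDiff ℝ (⊤ : ℕ∞) U) (hc : HasCompactSupport U)
    {K : E → ℝ} (hKm : Measurable K) (hK : Integrable (fun z => min 1 ‖z‖ * K z)) (x : E) :
    Integrable (fun z => (U x - U (x - z)) * (K z : ℂ)) := by
  obtain ⟨A, hA, hb⟩ := diff_bound hU hc
  have hUc := hU.continuous
  refine (hK.norm.const_mul (2 * A)).mono' ?_ (ae_of_all _ fun z => pre_bound hA hb K x z)
  exact AEStronglyMeasurable.mul (Continuous.aestronglyMeasurable (by fun_prop))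
    (Complex.measurable_ofReal.comp hKm).aestronglyMeasurable

lemma singOp_bounded {U : E → ℂ} (hU : ContDiff ℝ (⊤ : ℕ∞) U) (hc : HasCompactSupport U)
    {K : E → ℝ} (hK : Integrable (fun z => min 1 ‖z‖ * K z)) :
    ∃ B, ∀ x, ‖singOp K U x‖ ≤ B := by
  obtain ⟨A, hA, hb⟩ := diff_bound hU hc
  exact ⟨∫ z, 2 * A * ‖min 1 ‖z‖ * K z‖, fun x =>
    norm_integral_le_of_norm_le (hK.norm.const_mul (2 * A))
      (ae_of_all _ fun z => pre_bound hA hb K x z)⟩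

lemma singOp_integrable {U : E → ℂ} (hU : ContDiff ℝ (⊤ : ℕ∞) U) (hc : HasCompactSupport U)
    {K : E → ℝ} (hKm : Measurable K) (hK : Integrable (fun z => min 1 ‖z‖ * K z)) :
    Integrable (singOp K U) :=
  (prod_integrable hU hc hKm hK).integral_prod_left

lemma sq_integrable_of {f : E → ℂ} (hf : Integrable f) {B : ℝ} (hB : ∀ x, ‖f x‖ ≤ B) :
    Integrable (fun x => ‖f x‖ ^ 2) := by
  refine (hf.norm.const_mul B).mono' (hf.aestronglyMeasurable.norm.pow 2) (ae_of_all _ fun x => ?_)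
  rw [norm_pow, norm_norm, pow_two]
  exact mul_le_mul_of_nonneg_right (hB x) (norm_nonneg _)

lemma norm_fourier_le (f : E → ℂ) (ξ : E) : ‖𝓕 f ξ‖ ≤ ∫ x, ‖f x‖ := by
  rw [Real.fourier_eq]
  refine (norm_integral_le_integral_norm _).trans (le_of_eq ?_)
  simp

lemma fourier_singOp {U : E → ℂ} (hU : ContDiff ℝ (⊤ : ℕ∞) U) (hc : HasCompactSupport U)
    {K : E → ℝ} (hKm : Measurable K) (hK : Integrable (fun z => min 1 ‖z‖ * K z)) (ξ : E) :
    𝓕 (singOp K U) ξ = symb K ξ * 𝓕 U ξ := by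
  have hUi : Integrable U := hU.continuous.integrable_of_hasCompactSupport hc
  have hp := prod_integrable hU hc hKm hK
  have hp2 : Integrable (fun p : E × E => (Real.fourierChar (-⟪p.1, ξ⟫) : ℂ) *
      ((U p.1 - U (p.1 - p.2)) * (K p.2 : ℂ))) (volume.prod volume) := by
    refine hp.norm.mono' ?_ (ae_of_all _ fun p => by rw [norm_mul, Circle.norm_coe, one_mul])
    exact AEStronglyMeasurable.mul (Continuous.aestronglyMeasurable (by fun_prop))
      hp.aestronglyMeasurable
  have hch : ∀ f : E → ℂ, Integrable f → Integrable (fun x => (Real.fourierChar (-⟪x, ξ⟫) : ℂ) * f x) := by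
    intro f hf
    refine hf.norm.mono' ?_ (ae_of_all _ fun p => by rw [norm_mul, Circle.norm_coe, one_mul])
    exact AEStronglyMeasurable.mul (Continuous.aestronglyMeasurable (by fun_prop))
      hf.aestronglyMeasurable
  rw [Real.fourier_eq, Real.fourier_eq]
  simp only [Circle.smul_def, smul_eq_mul]
  unfold singOp symb
  simp only [← integral_const_mul]
  rw [integral_integral_swap hp2, integral_const_mul, ← integral_mul_const]
  refine integral_congr_ae (ae_of_all _ fun z => ?_)
  simp only
  have e1 : ∀ x, (Real.fourierChar (-⟪x, ξ⟫) : ℂ) * ((U x - U (x - z)) * (K z : ℂ)) =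
      ((Real.fourierChar (-⟪x, ξ⟫) : ℂ) * U x -
        (Real.fourierChar (-⟪z, ξ⟫) : ℂ) *
          ((Real.fourierChar (-⟪x - z, ξ⟫) : ℂ) * U (x - z))) * (K z : ℂ) := by
    intro x
    have : (Real.fourierChar (-⟪x, ξ⟫) : ℂ) =
      (Real.fourierChar (-⟪z, ξ⟫) : ℂ) * (Real.fourierChar (-⟪x - z, ξ⟫) : ℂ) := by
      rw [← Circle.coe_mul, ← AddChar.map_add_eq_mul, inner_sub_left]
      congr 3; ring
    rw [this]; ring
  simp only [e1]
  rw [integral_mul_const, integral_sub (hch U hUi)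
    (((hch U hUi).comp_sub_right z).const_mul _), integral_const_mul,
    integral_sub_right_eq_self (fun x => (Real.fourierChar (-⟪x, ξ⟫) : ℂ) * U x)]
  ring

lemma char_bound (t : ℝ) : ‖1 - (Real.fourierChar t : ℂ)‖ ≤ 2 * Real.pi * |t| := by
  rw [Real.fourierChar_apply, norm_sub_rev]
  have := Real.norm_exp_I_mul_ofReal_sub_one_le (x := 2 * Real.pi * t)
  rw [mul_comm Complex.I] at this
  refine this.trans (le_of_eq ?_)
  rw [norm_mul, Real.norm_of_nonneg (by positivity), Real.norm_eq_abs]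

lemma symb_integrand_bound (ξ z : E) : ‖1 - (Real.fourierChar (-⟪z, ξ⟫) : ℂ)‖ ≤
    2 * Real.pi * (1 + ‖ξ‖) * min 1 ‖z‖ := by
  have hpi := Real.pi_gt_three
  rcases le_total 1 ‖z‖ with h | h
  · rw [min_eq_left h]
    have : ‖1 - (Real.fourierChar (-⟪z, ξ⟫) : ℂ)‖ ≤ 2 :=
      (norm_sub_le _ _).trans (by rw [Circle.norm_coe]; norm_num)
    nlinarith [norm_nonneg ξ]
  · rw [min_eq_right h]
    refine (char_bound _).trans ?_
    rw [abs_neg]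
    have := abs_real_inner_le_norm z ξ
    have : |⟪z, ξ⟫| ≤ (1 + ‖ξ‖) * ‖z‖ := by nlinarith [norm_nonneg z]
    nlinarith

lemma symb_integrand {K : E → ℝ} (hKm : Measurable K) (hK : Integrable (fun z => min 1 ‖z‖ * K z))
    (ξ : E) : Integrable (fun z => (1 - (Real.fourierChar (-⟪z, ξ⟫) : ℂ)) * (K z : ℂ)) := by
  refine (hK.norm.const_mul (2 * Real.pi * (1 + ‖ξ‖))).mono' ?_ (ae_of_all _ fun z => ?_)
  · exact AEStronglyMeasurable.mul (Continuous.aestronglyMeasurable (by fun_prop))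
      (Complex.measurable_ofReal.comp hKm).aestronglyMeasurable
  · rw [norm_mul, norm_mul, Complex.norm_real, Real.norm_of_nonneg
      (by positivity : 0 ≤ min 1 ‖z‖), ← mul_assoc]
    exact mul_le_mul_of_nonneg_right (symb_integrand_bound ξ z) (norm_nonneg _)

lemma symb_bound {K : E → ℝ} (hK : Integrable (fun z => min 1 ‖z‖ * K z)) :
    ∃ B : ℝ, 0 ≤ B ∧ ∀ ξ, ‖symb K ξ‖ ≤ B * (1 + ‖ξ‖) := by
  refine ⟨2 * Real.pi * ∫ z, ‖min 1 ‖z‖ * K z‖, mul_nonneg (by positivity)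
    (integral_nonneg fun z => norm_nonneg _), fun ξ => ?_⟩
  have : ‖symb K ξ‖ ≤ ∫ z, 2 * Real.pi * (1 + ‖ξ‖) * ‖min 1 ‖z‖ * K z‖ := by
    refine norm_integral_le_of_norm_le (hK.norm.const_mul _) (ae_of_all _ fun z => ?_)
    rw [norm_mul, norm_mul, Complex.norm_real, Real.norm_of_nonneg
      (by positivity : 0 ≤ min 1 ‖z‖), ← mul_assoc]
    exact mul_le_mul_of_nonneg_right (symb_integrand_bound ξ z) (norm_nonneg _)
  rw [integral_const_mul] at this
  linarith

lemma fourier_singOp_integrable {U : E → ℂ} (hU : ContDiff ℝ (⊤ : ℕ∞) U) (hc : HasCompactSupport U)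
    {K : E → ℝ} (hKm : Measurable K) (hK : Integrable (fun z => min 1 ‖z‖ * K z)) :
    Integrable (𝓕 (singOp K U)) := by
  obtain ⟨B, hB0, hB⟩ := symb_bound hK
  have hcont : Continuous (𝓕 (singOp K U)) :=
    VectorFourier.fourierIntegral_continuous Real.continuous_fourierChar continuous_inner
      (singOp_integrable hU hc hKm hK)
  set S := hc.toSchwartzMap hU with hS
  have hSU : ∀ ξ, (𝓕 S) ξ = 𝓕 U ξ := fun ξ => rfl
  have h0 := (𝓕 S).integrable_pow_mul volume 0
  have h1 := (𝓕 S).integrable_pow_mul volume 1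
  refine ((h0.add h1).const_mul B).mono' hcont.aestronglyMeasurable (ae_of_all _ fun ξ => ?_)
  rw [fourier_singOp hU hc hKm hK, norm_mul]
  simp only [Pi.add_apply, pow_zero, pow_one, hSU]
  nlinarith [mul_le_mul_of_nonneg_right (hB ξ) (norm_nonneg (𝓕 U ξ))]

lemma plancherel_of {f : E → ℂ} (hf : Integrable f) (hfc : Continuous f)
    (hf' : Integrable (𝓕 f)) : ∫ ξ, ‖𝓕 f ξ‖ ^ 2 = ∫ x, ‖f x‖ ^ 2 := by
  have h : ∫ ξ, innerSL ℂ (𝓕 f ξ) (𝓕 f ξ) = ∫ x, innerSL ℂ (f x) (𝓕⁻ (𝓕 f) x) := by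
    have h0 := VectorFourier.integral_sesq_fourierIntegral_eq_neg_flip (innerSL ℂ)
      (L := innerₗ E) Real.continuous_fourierChar continuous_inner hf hf'
    rw [flip_innerₗ] at h0
    exact h0
  rw [hfc.fourierInv_fourier_eq hf hf'] at h
  apply Complex.ofRealLI.injective
  simpa [← LinearIsometry.integral_comp_comm, inner_self_eq_norm_sq_to_K] using h

end aux

section symbol

open scoped FourierTransform RealInnerProductSpace

/-- the radial part of the kernel -/
def kap (d : ℕ) (s : ℝ) (z : EuclideanSpace ℝ (Fin d)) : ℝ := (‖z‖ ^ ((d : ℝ) + s + 1))⁻¹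

lemma kap_nonneg (d : ℕ) (s : ℝ) (z : EuclideanSpace ℝ (Fin d)) : 0 ≤ kap d s z := by
  unfold kap; positivity

lemma kap_measurable (d : ℕ) (s : ℝ) : Measurable (kap d s) := by
  unfold kap; fun_prop

lemma norm_mul_kap (d : ℕ) (s : ℝ) (hs : 0 < s) (z : EuclideanSpace ℝ (Fin d)) :
    ‖z‖ * kap d s z = (‖z‖ ^ ((d : ℝ) + s))⁻¹ := by
  unfold kap
  rcases eq_or_ne z 0 with rfl | hz
  · simp only [norm_zero, zero_mul]
    rw [Real.zero_rpow (by positivity), inv_zero]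
  · have : 0 < ‖z‖ := norm_pos_iff.2 hz
    rw [Real.rpow_add_one this.ne']
    field_simp

/-- the weight -/
def wt (d : ℕ) (s : ℝ) (z : EuclideanSpace ℝ (Fin d)) : ℝ := min 1 ‖z‖ * (‖z‖ * kap d s z)

lemma wt_integrable (d : ℕ) (hd : 1 ≤ d) (s : ℝ) (hs : s ∈ Set.Ioo (0 : ℝ) 1) :
    Integrable (wt d s) := by
  have := integrable_weight d hd s hs
  refine this.congr (ae_of_all _ fun z => ?_)
  simp only [wt]
  rw [norm_mul_kap d s hs.1]

/-- the symbol potential -/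
def pot (d : ℕ) (s : ℝ) (ξ : EuclideanSpace ℝ (Fin d)) : ℝ :=
  ∫ z, (1 - Real.cos (2 * Real.pi * ⟪z, ξ⟫)) * kap d s z

lemma pot_bound (d : ℕ) (s : ℝ) (ξ z : EuclideanSpace ℝ (Fin d)) :
    ‖(1 - Real.cos (2 * Real.pi * ⟪z, ξ⟫)) * kap d s z‖ ≤
      (2 + 2 * Real.pi ^ 2 * ‖ξ‖ ^ 2) * wt d s z := by
  have hk := kap_nonneg d s z
  have h0 : 0 ≤ 1 - Real.cos (2 * Real.pi * ⟪z, ξ⟫) := by linarith [Real.cos_le_one (2 * Real.pi * ⟪z, ξ⟫)]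
  rw [Real.norm_of_nonneg (mul_nonneg h0 hk), wt, ← mul_assoc, ← mul_assoc]
  refine mul_le_mul_of_nonneg_right ?_ hk
  rcases le_total 1 ‖z‖ with h | h
  · rw [min_eq_left h]
    have : 1 - Real.cos (2 * Real.pi * ⟪z, ξ⟫) ≤ 2 := by
      linarith [Real.neg_one_le_cos (2 * Real.pi * ⟪z, ξ⟫)]
    have h3 : 0 ≤ 2 * Real.pi ^ 2 * ‖ξ‖ ^ 2 := by positivity
    nlinarith
  · rw [min_eq_right h]
    have h1 := Real.one_sub_sq_div_two_le_cos (x := 2 * Real.pi * ⟪z, ξ⟫)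
    have h2 : ⟪z, ξ⟫ ^ 2 ≤ (‖z‖ * ‖ξ‖) ^ 2 := by
      rw [← sq_abs]; exact pow_le_pow_left₀ (abs_nonneg _) (abs_real_inner_le_norm z ξ) 2
    have h3 : Real.pi ^ 2 * ⟪z, ξ⟫ ^ 2 ≤ Real.pi ^ 2 * (‖z‖ * ‖ξ‖) ^ 2 := by gcongr
    nlinarith [sq_nonneg ‖z‖]

lemma pot_integrable (d : ℕ) (hd : 1 ≤ d) (s : ℝ) (hs : s ∈ Set.Ioo (0 : ℝ) 1)
    (ξ : EuclideanSpace ℝ (Fin d)) :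
    Integrable (fun z => (1 - Real.cos (2 * Real.pi * ⟪z, ξ⟫)) * kap d s z) := by
  refine ((wt_integrable d hd s hs).const_mul _).mono' ?_ (ae_of_all _ fun z => pot_bound d s ξ z)
  exact AEStronglyMeasurable.mul (Continuous.aestronglyMeasurable (by fun_prop))
    (kap_measurable d s).aestronglyMeasurable

lemma pot_smul (d : ℕ) (s : ℝ) (ξ : EuclideanSpace ℝ (Fin d)) {l : ℝ} (hl : 0 < l) :
    pot d s (l • ξ) = l ^ (1 + s) * pot d s ξ := by
  have h := Measure.integral_comp_smul (volume : Measure (EuclideanSpace ℝ (Fin d)))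
    (fun z => (1 - Real.cos (2 * Real.pi * ⟪z, ξ⟫)) * kap d s z) l
  have h2 : ∀ z : EuclideanSpace ℝ (Fin d), kap d s (l • z) = (l ^ ((d : ℝ) + s + 1))⁻¹ * kap d s z := by
    intro z
    unfold kap
    rw [norm_smul, Real.norm_of_nonneg hl.le, Real.mul_rpow hl.le (norm_nonneg _), mul_inv]
  simp only [h2, real_inner_smul_left] at h
  unfold pot
  simp only [real_inner_smul_right]
  have h3 : ∀ z : EuclideanSpace ℝ (Fin d), (1 - Real.cos (2 * Real.pi * (l * ⟪z, ξ⟫))) *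
      ((l ^ ((d : ℝ) + s + 1))⁻¹ * kap d s z) = (l ^ ((d : ℝ) + s + 1))⁻¹ *
      ((1 - Real.cos (2 * Real.pi * (l * ⟪z, ξ⟫))) * kap d s z) := fun z => by ring
  simp only [h3] at h
  rw [integral_const_mul] at h
  simp only [finrank_euclideanSpace, Fintype.card_fin, smul_eq_mul] at h
  rw [abs_of_nonneg (by positivity)] at h
  have h4 : l ^ ((d : ℝ) + s + 1) = l ^ d * l ^ (1 + s) := by
    rw [← Real.rpow_natCast, ← Real.rpow_add hl]; congr 1; ring
  rw [h4] at h
  have h5 : 0 < l ^ d := by positivity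
  have h6 : 0 < l ^ (1 + s) := by positivity
  rw [inv_mul_eq_iff_eq_mul₀ (by positivity)] at h
  rw [h]
  field_simp

lemma pot_iso (d : ℕ) (s : ℝ) (ξ η : EuclideanSpace ℝ (Fin d)) (h : ‖ξ‖ = ‖η‖) :
    pot d s ξ = pot d s η := by
  set R := (Submodule.span ℝ {ξ - η})ᗮ.reflection with hR
  have hRξ : R ξ = η := Submodule.reflection_sub h
  unfold pot
  rw [← (R.measurePreserving).integral_comp R.toHomeomorph.measurableEmbedding
    (fun z => (1 - Real.cos (2 * Real.pi * ⟪z, η⟫)) * kap d s z)]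
  refine integral_congr_ae (ae_of_all _ fun z => ?_)
  simp only [kap, ← hRξ, LinearIsometryEquiv.inner_map_map, LinearIsometryEquiv.norm_map]

lemma pot_pos (d : ℕ) (hd : 1 ≤ d) (s : ℝ) (hs : s ∈ Set.Ioo (0 : ℝ) 1)
    (e : EuclideanSpace ℝ (Fin d)) (he : ‖e‖ = 1) : 0 < pot d s e := by
  unfold pot
  rw [integral_pos_iff_support_of_nonneg _ (pot_integrable d hd s hs e)]
  · have hop : IsOpen {z : EuclideanSpace ℝ (Fin d) | Real.cos (2 * Real.pi * ⟪z, e⟫) < 1 ∧ z ≠ 0} :=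
      IsOpen.inter (s := {z | Real.cos (2 * Real.pi * ⟪z, e⟫) < 1}) (t := {z | z ≠ 0})
        (isOpen_lt (by fun_prop) (by fun_prop)) isOpen_ne
    refine lt_of_lt_of_le (hop.measure_pos volume ⟨(1 / 2 : ℝ) • e, ?_, ?_⟩) (measure_mono ?_)
    · simp only [real_inner_smul_left, real_inner_self_eq_norm_sq, he]
      rw [show 2 * Real.pi * (1 / 2 * 1 ^ 2) = Real.pi by ring, Real.cos_pi]; norm_num
    · intro h0
      have := congrArg norm h0
      rw [norm_smul, he] at this; norm_num at this
    · rintro z ⟨hz, hz0⟩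
      have : 0 < kap d s z := by
        have := norm_pos_iff.2 hz0
        unfold kap; positivity
      exact (mul_pos (by linarith) this).ne'
  · intro z
    exact mul_nonneg (by simpa using Real.cos_le_one _) (kap_nonneg d s z)

lemma pot_deriv (d : ℕ) (hd : 1 ≤ d) (s : ℝ) (hs : s ∈ Set.Ioo (0 : ℝ) 1)
    (ξ : EuclideanSpace ℝ (Fin d)) :
    (1 + s) * pot d s ξ =
      ∫ z, 2 * Real.pi * (Real.sin (2 * Real.pi * ⟪z, ξ⟫) * (⟪z, ξ⟫ * kap d s z)) := by
  have hpi := Real.pi_gt_three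
  have key := hasDerivAt_integral_of_dominated_loc_of_deriv_le (μ := volume)
    (F := fun (l : ℝ) (z : EuclideanSpace ℝ (Fin d)) =>
      (1 - Real.cos (2 * Real.pi * (l * ⟪z, ξ⟫))) * kap d s z)
    (F' := fun l z => 2 * Real.pi *
      (Real.sin (2 * Real.pi * (l * ⟪z, ξ⟫)) * (⟪z, ξ⟫ * kap d s z)))
    (x₀ := 1) (s := Set.Ioo 0 2)
    (bound := fun z => (2 * Real.pi * (1 + 4 * Real.pi * ‖ξ‖) * ‖ξ‖) * wt d s z)
    (Ioo_mem_nhds (by norm_num) (by norm_num)) ?_ ?_ ?_ ?_ ?_ ?_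
  · have h1 := key.2
    have h2 : HasDerivAt (fun l : ℝ => l ^ (1 + s) * pot d s ξ) ((1 + s) * 1 ^ (1 + s - 1) * pot d s ξ) 1 :=
      (Real.hasDerivAt_rpow_const (Or.inl one_ne_zero)).mul_const _
    have h3 : (fun l : ℝ => l ^ (1 + s) * pot d s ξ) =ᶠ[𝓝 1] fun l : ℝ =>
        ∫ z, (1 - Real.cos (2 * Real.pi * (l * ⟪z, ξ⟫))) * kap d s z := by
      filter_upwards [lt_mem_nhds (zero_lt_one (α := ℝ))] with l hl
      rw [← pot_smul d s ξ hl, pot]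
      simp only [real_inner_smul_right]
    have h4 := (h1.congr_of_eventuallyEq h3).unique h2
    simpa using h4.symm
  · refine Eventually.of_forall fun l => ?_
    exact AEStronglyMeasurable.mul (Continuous.aestronglyMeasurable (by fun_prop))
      (kap_measurable d s).aestronglyMeasurable
  · simpa using pot_integrable d hd s hs ξ
  · refine AEStronglyMeasurable.const_mul (AEStronglyMeasurable.mul (Continuous.aestronglyMeasurable (by fun_prop))
      (AEStronglyMeasurable.mul (Continuous.aestronglyMeasurable (by fun_prop))
      (kap_measurable d s).aestronglyMeasurable)) _
  · refine ae_of_all _ fun z l hl => ?_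
    have hk := kap_nonneg d s z
    have hin := abs_real_inner_le_norm z ξ
    have hsin : |Real.sin (2 * Real.pi * (l * ⟪z, ξ⟫))| ≤ (1 + 4 * Real.pi * ‖ξ‖) * min 1 ‖z‖ := by
      rcases le_total 1 ‖z‖ with h | h
      · rw [min_eq_left h]
        have := Real.abs_sin_le_one (2 * Real.pi * (l * ⟪z, ξ⟫))
        have : 0 ≤ 4 * Real.pi * ‖ξ‖ := by positivity
        linarith
      · rw [min_eq_right h]
        have h1 : |Real.sin (2 * Real.pi * (l * ⟪z, ξ⟫))| ≤ |2 * Real.pi * (l * ⟪z, ξ⟫)| :=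
          Real.abs_sin_le_abs
        have h2 : |2 * Real.pi * (l * ⟪z, ξ⟫)| ≤ 2 * Real.pi * (2 * (‖z‖ * ‖ξ‖)) := by
          rw [abs_mul, abs_mul l, abs_of_pos (by positivity : 0 < 2 * Real.pi), abs_of_pos hl.1]
          have := hl.2.le
          gcongr
        nlinarith [norm_nonneg z]
    rw [norm_mul, Real.norm_of_nonneg (by positivity : 0 ≤ 2 * Real.pi), norm_mul, norm_mul,
      Real.norm_of_nonneg hk, Real.norm_eq_abs, Real.norm_eq_abs, wt]
    calc _ ≤ 2 * Real.pi * (((1 + 4 * Real.pi * ‖ξ‖) * min 1 ‖z‖) * ((‖z‖ * ‖ξ‖) * kap d s z)) := by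
            gcongr
      _ = _ := by ring
  · exact (wt_integrable d hd s hs).const_mul _
  · refine ae_of_all _ fun z l hl => ?_
    have h1 : HasDerivAt (fun l : ℝ => 2 * Real.pi * (l * ⟪z, ξ⟫)) (2 * Real.pi * (1 * ⟪z, ξ⟫)) l :=
      ((hasDerivAt_id l).mul_const _).const_mul _
    have h2 := (h1.cos.const_sub 1).mul_const (kap d s z)
    refine h2.congr_deriv ?_
    ring

lemma kj_integrable (d : ℕ) (hd : 1 ≤ d) (s : ℝ) (hs : s ∈ Set.Ioo (0 : ℝ) 1) (j : Fin d) :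
    Integrable (fun z : EuclideanSpace ℝ (Fin d) => min 1 ‖z‖ * (z j * kap d s z)) := by
  refine (wt_integrable d hd s hs).mono' ?_ (ae_of_all _ fun z => ?_)
  · exact AEStronglyMeasurable.mul (Continuous.aestronglyMeasurable (by fun_prop))
      (AEStronglyMeasurable.mul (Continuous.aestronglyMeasurable (by fun_prop))
      (kap_measurable d s).aestronglyMeasurable)
  · have hk := kap_nonneg d s z
    have := PiLp.norm_apply_le z j
    rw [norm_mul, norm_mul, Real.norm_of_nonneg hk, Real.norm_of_nonneg (by positivity : 0 ≤ min 1 ‖z‖), wt]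
    gcongr

lemma kj_measurable (d : ℕ) (s : ℝ) (j : Fin d) :
    Measurable (fun z : EuclideanSpace ℝ (Fin d) => z j * kap d s z) :=
  Measurable.mul (Continuous.measurable (by fun_prop)) (kap_measurable d s)

lemma symb_lower (d : ℕ) (hd : 1 ≤ d) (s : ℝ) (hs : s ∈ Set.Ioo (0 : ℝ) 1) :
    ∃ c : ℝ, 0 < c ∧ ∀ ξ : EuclideanSpace ℝ (Fin d), ξ ≠ 0 →
      c * ‖ξ‖ ^ (2 * s) ≤ ∑ j, ‖symb (fun z : EuclideanSpace ℝ (Fin d) => z j * kap d s z) ξ‖ ^ 2 := by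
  set e : EuclideanSpace ℝ (Fin d) := EuclideanSpace.single ⟨0, hd⟩ 1 with he
  have he1 : ‖e‖ = 1 := by simp [he]
  have hp := pot_pos d hd s hs e he1
  set c0 := (1 + s) * pot d s e / (2 * Real.pi) with hc0
  have hpi := Real.pi_pos
  have hs0 := hs.1
  have hc0p : 0 < c0 := by positivity
  refine ⟨c0 ^ 2, by positivity, fun ξ hξ => ?_⟩
  have hn : 0 < ‖ξ‖ := norm_pos_iff.2 hξ
  have h1 : pot d s ξ = ‖ξ‖ ^ (1 + s) * pot d s e := by
    rw [← pot_smul d s e hn]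
    apply pot_iso
    rw [norm_smul, he1, norm_norm, mul_one]
  have h2 := pot_deriv d hd s hs ξ
  rw [integral_const_mul, h1] at h2
  have him : ∀ j, (symb (fun z : EuclideanSpace ℝ (Fin d) => z j * kap d s z) ξ).im =
      ∫ z : EuclideanSpace ℝ (Fin d), Real.sin (2 * Real.pi * ⟪z, ξ⟫) * (z j * kap d s z) := by
    intro j
    unfold symb
    rw [← RCLike.im_eq_complex_im, ← integral_im (symb_integrand (kj_measurable d s j) (kj_integrable d hd s hs j) ξ)]
    refine integral_congr_ae (ae_of_all _ fun z => ?_)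
    simp only [RCLike.im_eq_complex_im]
    rw [Complex.im_mul_ofReal, Real.fourierChar_apply, Complex.sub_im, Complex.exp_ofReal_mul_I_im]
    simp
  have hint : ∀ j : Fin d, Integrable (fun z : EuclideanSpace ℝ (Fin d) =>
      Real.sin (2 * Real.pi * ⟪z, ξ⟫) * (z j * kap d s z)) := by
    intro j
    have := (symb_integrand (kj_measurable d s j) (kj_integrable d hd s hs j) ξ).im
    refine this.congr (ae_of_all _ fun z => ?_)
    simp only [RCLike.im_eq_complex_im]
    rw [Complex.im_mul_ofReal, Real.fourierChar_apply, Complex.sub_im, Complex.exp_ofReal_mul_I_im]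
    simp
  have hsum : ∫ z : EuclideanSpace ℝ (Fin d), Real.sin (2 * Real.pi * ⟪z, ξ⟫) * (⟪z, ξ⟫ * kap d s z) =
      ∑ j, ξ j * (symb (fun z : EuclideanSpace ℝ (Fin d) => z j * kap d s z) ξ).im := by
    simp only [him, ← integral_const_mul]
    rw [← integral_finsetSum _ (fun j _ => (hint j).const_mul _)]
    refine integral_congr_ae (ae_of_all _ fun z => ?_)
    have : ⟪z, ξ⟫ = ∑ j, ξ j * z j := by
      simp [PiLp.inner_apply]
    simp only
    nth_rewrite 2 [this]
    rw [Finset.sum_mul, Finset.mul_sum]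
    exact Finset.sum_congr rfl fun j _ => by ring
  rw [hsum] at h2
  set S := ∑ j, ξ j * (symb (fun z : EuclideanSpace ℝ (Fin d) => z j * kap d s z) ξ).im with hS
  have hSv : S = c0 * ‖ξ‖ ^ (1 + s) := by
    rw [hc0]; field_simp; linarith
  have hcs : S ^ 2 ≤ (∑ j, ξ j ^ 2) *
      ∑ j, (symb (fun z : EuclideanSpace ℝ (Fin d) => z j * kap d s z) ξ).im ^ 2 :=
    Finset.sum_mul_sq_le_sq_mul_sq _ _ _
  rw [← EuclideanSpace.real_norm_sq_eq] at hcs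
  have hle : ∑ j, (symb (fun z : EuclideanSpace ℝ (Fin d) => z j * kap d s z) ξ).im ^ 2 ≤
      ∑ j, ‖symb (fun z : EuclideanSpace ℝ (Fin d) => z j * kap d s z) ξ‖ ^ 2 := by
    refine Finset.sum_le_sum fun j _ => ?_
    rw [← sq_abs]
    exact pow_le_pow_left₀ (abs_nonneg _) (Complex.abs_im_le_norm _) 2
  have hpow : S ^ 2 = ‖ξ‖ ^ 2 * (c0 ^ 2 * ‖ξ‖ ^ (2 * s)) := by
    rw [hSv, Real.rpow_add hn, Real.rpow_one, mul_comm 2 s, Real.rpow_mul hn.le, Real.rpow_two]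
    ring
  have := hpow ▸ hcs
  exact (le_of_mul_le_mul_left this (by positivity)).trans hle

end symbol

section final

open scoped FourierTransform RealInnerProductSpace

lemma muS_pos (d : ℕ) (s : ℝ) (hs : s ∈ Set.Ioo (0 : ℝ) 1) : 0 < muS d s := by
  have h0 := hs.1
  have h1 : 0 < 1 - s := by linarith [hs.2]
  unfold muS
  have := Real.pi_pos
  have := Real.Gamma_pos_of_pos (s := ((d : ℝ) + s + 1) / 2) (by positivity)
  have := Real.Gamma_pos_of_pos (s := (1 - s) / 2) (by positivity)
  positivity

lemma fracGrad_apply (d : ℕ) (hd : 1 ≤ d) (s : ℝ) (hs : s ∈ Set.Ioo (0 : ℝ) 1)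
    {u : EuclideanSpace ℝ (Fin d) → ℝ}
    (hU : ContDiff ℝ (⊤ : ℕ∞) (fun x => (u x : ℂ))) (hc : HasCompactSupport (fun x => (u x : ℂ)))
    (x : EuclideanSpace ℝ (Fin d)) (j : Fin d) :
    ((fracGrad d s u x j : ℝ) : ℂ) = (muS d s : ℂ) *
      singOp (fun z : EuclideanSpace ℝ (Fin d) => z j * kap d s z) (fun x => (u x : ℂ)) x := by
  have hint : ∀ i : Fin d, Integrable (fun z : EuclideanSpace ℝ (Fin d) =>
      (u x - u (x - z)) * (z i * kap d s z)) := by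
    intro i
    have := (singOp_integrand hU hc (kj_measurable d s i) (kj_integrable d hd s hs i) x).re
    refine this.congr (ae_of_all _ fun z => ?_)
    simp only [RCLike.re_eq_complex_re]
    rw [← Complex.ofReal_sub, ← Complex.ofReal_mul, Complex.ofReal_re]
  have h1 : ∫ y, (‖x - y‖ ^ ((d : ℝ) + s + 1))⁻¹ • ((u x - u y) • (x - y)) =
      ∫ z, kap d s z • ((u x - u (x - z)) • z) := by
    rw [← integral_sub_left_eq_self _ volume x]
    simp only [sub_sub_cancel, kap]
  unfold fracGrad singOp
  rw [h1, PiLp.smul_apply, smul_eq_mul, Complex.ofReal_mul, eval_integral_piLp]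
  · congr 1
    rw [← integral_complex_ofReal]
    refine integral_congr_ae (ae_of_all _ fun z => ?_)
    simp only [PiLp.smul_apply, smul_eq_mul]
    push_cast
    ring
  · intro i
    refine (hint i).congr (ae_of_all _ fun z => ?_)
    simp only [PiLp.smul_apply, smul_eq_mul]
    ring

lemma fracGrad_energy (d : ℕ) (hd : 1 ≤ d) (s : ℝ) (hs : s ∈ Set.Ioo (0 : ℝ) 1)
    {u : EuclideanSpace ℝ (Fin d) → ℝ}
    (hU : ContDiff ℝ (⊤ : ℕ∞) (fun x => (u x : ℂ))) (hc : HasCompactSupport (fun x => (u x : ℂ))) :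
    Integrable (fun ξ => (∑ j, ‖symb (fun z : EuclideanSpace ℝ (Fin d) => z j * kap d s z) ξ‖ ^ 2) *
      ‖𝓕 (fun x => (u x : ℂ)) ξ‖ ^ 2) ∧
    ∫ x, ‖fracGrad d s u x‖ ^ 2 = muS d s ^ 2 *
      ∫ ξ, (∑ j, ‖symb (fun z : EuclideanSpace ℝ (Fin d) => z j * kap d s z) ξ‖ ^ 2) *
      ‖𝓕 (fun x => (u x : ℂ)) ξ‖ ^ 2 := by
  have hT := fun j => singOp_integrable hU hc (kj_measurable d s j) (kj_integrable d hd s hs j)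
  have hF := fun j => fourier_singOp_integrable hU hc (kj_measurable d s j) (kj_integrable d hd s hs j)
  have hTc := fun j => singOp_continuous hU hc (kj_measurable d s j) (kj_integrable d hd s hs j)
  have hFe : ∀ ξ, (∑ j, ‖symb (fun z : EuclideanSpace ℝ (Fin d) => z j * kap d s z) ξ‖ ^ 2) *
      ‖𝓕 (fun x => (u x : ℂ)) ξ‖ ^ 2 = ∑ j, ‖𝓕 (singOp (fun z : EuclideanSpace ℝ (Fin d) =>
        z j * kap d s z) (fun x => (u x : ℂ))) ξ‖ ^ 2 := by
    intro ξ
    rw [Finset.sum_mul]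
    refine Finset.sum_congr rfl fun j _ => ?_
    rw [fourier_singOp hU hc (kj_measurable d s j) (kj_integrable d hd s hs j), norm_mul, mul_pow]
  have hF2 := fun j => sq_integrable_of (hF j) (norm_fourier_le _)
  have hT2 := fun j => sq_integrable_of (hT j)
    (singOp_bounded hU hc (kj_integrable d hd s hs j)).choose_spec
  simp only [hFe]
  refine ⟨integrable_finsetSum _ fun j _ => hF2 j, ?_⟩
  rw [integral_finsetSum _ fun j _ => hF2 j]
  have hG : ∀ x, ‖fracGrad d s u x‖ ^ 2 = muS d s ^ 2 * ∑ j, ‖singOp (fun z : EuclideanSpace ℝ (Fin d) =>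
        z j * kap d s z) (fun x => (u x : ℂ)) x‖ ^ 2 := by
    intro x
    rw [EuclideanSpace.real_norm_sq_eq, Finset.mul_sum]
    refine Finset.sum_congr rfl fun j _ => ?_
    have := congrArg (fun w => ‖w‖ ^ 2) (fracGrad_apply d hd s hs hU hc x j)
    simp only [norm_mul, Complex.norm_real, mul_pow] at this
    simpa using this
  simp only [hG]
  rw [integral_const_mul, integral_finsetSum _ fun j _ => hT2 j]
  congr 1
  exact Finset.sum_congr rfl fun j _ => (plancherel_of (hT j) (hTc j) (hF j)).symm

lemma exists_eps (d : ℕ) (hd : 1 ≤ d) (W : ℝ) (hW : 0 < W) : ∃ ε : ℝ, 0 < ε ∧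
    volume.real (Metric.ball (0 : EuclideanSpace ℝ (Fin d)) ε) * W ≤ 1 / 2 := by
  set b := volume.real (Metric.ball (0 : EuclideanSpace ℝ (Fin d)) 1)
  have hb : 0 ≤ b := measureReal_nonneg
  set t : ℝ := 1 / (2 * W * (b + 1)) with ht
  have ht0 : 0 < t := by positivity
  refine ⟨min 1 t, by positivity, ?_⟩
  rw [measureReal_def, Measure.addHaar_ball_of_pos _ _ (by positivity), ENNReal.toReal_mul,
    ENNReal.toReal_ofReal (by positivity), ← measureReal_def, finrank_euclideanSpace, Fintype.card_fin]
  have h1 : (min 1 t) ^ d ≤ t := by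
    calc (min 1 t) ^ d ≤ (min 1 t) ^ 1 := pow_le_pow_of_le_one (by positivity) (min_le_left _ _) hd
      _ ≤ t := by rw [pow_one]; exact min_le_right _ _
  calc (min 1 t) ^ d * b * W ≤ t * (b + 1) * W := by gcongr; linarith
    _ = 1 / 2 := by rw [ht]; field_simp

lemma l1_sq_le {α : Type*} [MeasurableSpace α] {μ : Measure α} [IsFiniteMeasure μ] {f : α → ℝ}
    (h1 : Integrable f μ) (h2 : Integrable (fun x => f x ^ 2) μ) :
    (∫ x, f x ∂μ) ^ 2 ≤ (μ.real Set.univ + 1) * ∫ x, f x ^ 2 ∂μ := by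
  set V := μ.real Set.univ
  have hV : 0 ≤ V := measureReal_nonneg
  set I := ∫ x, f x ∂μ with hI
  set a := I / (V + 1) with ha
  have h0 : 0 ≤ ∫ x, (f x - a) ^ 2 ∂μ := integral_nonneg fun x => sq_nonneg _
  have he : ∫ x, (f x - a) ^ 2 ∂μ = (∫ x, f x ^ 2 ∂μ) - 2 * a * I + a ^ 2 * V := by
    have : ∀ x, (f x - a) ^ 2 = f x ^ 2 - 2 * a * f x + a ^ 2 := fun x => by ring
    simp only [this]
    rw [integral_add (f := fun x => f x ^ 2 - 2 * a * f x) (h2.sub (h1.const_mul _)) (integrable_const _),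
      integral_sub h2 (h1.const_mul _), integral_const_mul, integral_const, smul_eq_mul]
    ring
  have hIa : I = a * (V + 1) := by rw [ha]; field_simp
  rw [he] at h0
  rw [hIa] at h0 ⊢
  nlinarith [sq_nonneg a, mul_nonneg (sq_nonneg a) hV]

end final

/-- The fractional Poincaré inequality on `C_c^∞(Ω)` for a bounded open set `Ω`. -/
theorem stmt4 (d : ℕ) (hd : 1 ≤ d) (s : ℝ) (hs : s ∈ Set.Ioo (0 : ℝ) 1)
    (Ω : Set (EuclideanSpace ℝ (Fin d))) (hΩo : IsOpen Ω) (hΩb : Bornology.IsBounded Ω) :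
    ∃ C : ℝ, 0 < C ∧
      ∀ u : EuclideanSpace ℝ (Fin d) → ℝ,
        ContDiff ℝ (⊤ : ℕ∞) u → HasCompactSupport u → tsupport u ⊆ Ω →
        (∫ x in Ω, (u x) ^ 2) ^ ((1 : ℝ) / 2) ≤
          C * (∫ x, ‖fracGrad d s u x‖ ^ 2) ^ ((1 : ℝ) / 2) := by
  classical
  obtain ⟨c, hc0, hc⟩ := symb_lower d hd s hs
  have hfin : IsFiniteMeasure (volume.restrict Ω) := ⟨by
    rw [Measure.restrict_apply_univ]; exact hΩb.measure_lt_top⟩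
  obtain ⟨ε, hε, hεW⟩ := exists_eps d hd ((volume.restrict Ω).real Set.univ + 1) (by positivity)
  have hmu := muS_pos d s hs
  have hs0 := hs.1
  set D : ℝ := 2 / (c * ε ^ (2 * s) * muS d s ^ 2) with hD
  have hDp : 0 < D := by positivity
  refine ⟨D ^ ((1 : ℝ) / 2), by positivity, fun u hu hcu hsu => ?_⟩
  rw [← Real.mul_rpow hDp.le (integral_nonneg fun x => by positivity)]
  refine Real.rpow_le_rpow (integral_nonneg fun x => by positivity) ?_ (by norm_num)
  have hU : ContDiff ℝ (⊤ : ℕ∞) (fun x => (u x : ℂ)) := Complex.ofRealCLM.contDiff.comp hu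
  have hcU : HasCompactSupport (fun x => (u x : ℂ)) := hcu.comp_left (g := Complex.ofReal) rfl
  obtain ⟨hEi, hE⟩ := fracGrad_energy d hd s hs hU hcU
  set F := FourierTransform.fourier (fun x => (u x : ℂ)) with hF
  have hzero : ∀ x, x ∉ Ω → u x = 0 := fun x hx =>
    image_eq_zero_of_notMem_tsupport fun h => hx (hsu h)
  -- Plancherel for `u`
  have hP : ∫ ξ, ‖F ξ‖ ^ 2 = ∫ x, ‖(u x : ℂ)‖ ^ 2 :=
    (hcU.toSchwartzMap hU).integral_norm_sq_fourier
  have hN : ∫ x, ‖(u x : ℂ)‖ ^ 2 = ∫ x in Ω, u x ^ 2 := by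
    rw [setIntegral_eq_integral_of_forall_compl_eq_zero]
    · simp
    · intro x hx; simp [hzero x hx]
  have hI : ∫ x, ‖(u x : ℂ)‖ = ∫ x in Ω, |u x| := by
    rw [setIntegral_eq_integral_of_forall_compl_eq_zero]
    · simp
    · intro x hx; simp [hzero x hx]
  have hCS := l1_sq_le (μ := volume.restrict Ω) (f := fun x => |u x|)
    ((hu.continuous.integrable_of_hasCompactSupport hcu).abs.restrict)
    (by
      simp only [sq_abs]
      have hc2 : HasCompactSupport (fun x => u x ^ 2) := hcu.comp_left (g := fun t : ℝ => t ^ 2) (by simp)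
      exact ((hu.continuous.pow 2).integrable_of_hasCompactSupport hc2).restrict)
  simp only [sq_abs] at hCS
  set N := ∫ x in Ω, u x ^ 2 with hNdef
  set I := ∫ x in Ω, |u x| with hIdef
  have hN0 : 0 ≤ N := integral_nonneg fun x => by positivity
  have hFi : Integrable F := (SchwartzMap.integrable (FourierTransform.fourier (hcU.toSchwartzMap hU)))
  have hFb : ∀ ξ, ‖F ξ‖ ≤ I := fun ξ => (norm_fourier_le _ ξ).trans hI.le
  have hF2 : Integrable (fun ξ => ‖F ξ‖ ^ 2) := sq_integrable_of hFi hFb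
  set B := Metric.ball (0 : EuclideanSpace ℝ (Fin d)) ε with hB
  have hBm : MeasurableSet B := Metric.isOpen_ball.measurableSet
  have hsplit := integral_add_compl hBm hF2
  have hlow : ∫ ξ in B, ‖F ξ‖ ^ 2 ≤ N / 2 := by
    have h1 : ∫ ξ in B, ‖F ξ‖ ^ 2 ≤ ∫ ξ in B, I ^ 2 := by
      refine setIntegral_mono hF2.integrableOn
        (integrableOn_const (Metric.isBounded_ball.measure_lt_top.ne)) fun ξ => ?_
      exact pow_le_pow_left₀ (norm_nonneg _) (hFb ξ) 2
    rw [setIntegral_const, smul_eq_mul] at h1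
    have hb0 : 0 ≤ volume.real B := measureReal_nonneg
    calc _ ≤ _ := h1
      _ ≤ volume.real B * (((volume.restrict Ω).real Set.univ + 1) * N) := by gcongr
      _ = volume.real B * ((volume.restrict Ω).real Set.univ + 1) * N := by ring
      _ ≤ 1 / 2 * N := by gcongr
      _ = N / 2 := by ring
  have hhigh : c * ε ^ (2 * s) * ∫ ξ in Bᶜ, ‖F ξ‖ ^ 2 ≤
      ∫ ξ, (∑ j, ‖symb (fun z : EuclideanSpace ℝ (Fin d) => z j * kap d s z) ξ‖ ^ 2) * ‖F ξ‖ ^ 2 := by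
    rw [← integral_const_mul]
    refine (setIntegral_mono_on (hF2.integrableOn.const_mul _) hEi.integrableOn hBm.compl
      fun ξ hξ => ?_).trans (setIntegral_le_integral hEi (ae_of_all _ fun ξ => by positivity))
    have hξ' : ε ≤ ‖ξ‖ := by simpa [hB] using hξ
    have hξ0 : ξ ≠ 0 := by
      rintro rfl
      rw [norm_zero] at hξ'; linarith
    refine mul_le_mul_of_nonneg_right ?_ (by positivity)
    refine le_trans ?_ (hc ξ hξ0)
    gcongr
  set Q := ∫ ξ, (∑ j, ‖symb (fun z : EuclideanSpace ℝ (Fin d) => z j * kap d s z) ξ‖ ^ 2) * ‖F ξ‖ ^ 2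
  rw [hE]
  have hDQ : D * (muS d s ^ 2 * Q) = 2 * (Q / (c * ε ^ (2 * s))) := by
    rw [hD]; field_simp
  rw [hDQ]
  have : ∫ ξ in Bᶜ, ‖F ξ‖ ^ 2 ≤ Q / (c * ε ^ (2 * s)) := by
    rw [le_div_iff₀ (by positivity)]; linarith
  linarith [hsplit, hP, hN]

end
end

section
/- Let d ≥ 1 and s ∈ (0,1). There exists a constant C > 0, depending only on d and s, such that for every u ∈ C_c^∞(ℝ^d): ∫_{ℝ^d} ∫_{ℝ^d} |u(x) - u(y)|² / |x - y|^{d+2s} dx dy = C ∫_{ℝ^d} |∇^s u(x)|² dx; that is, the squared Gagliardo seminorm [u]²_{s,ℝ^d} equals a dimensional constant times the squared L² norm of the Riesz fractional gradient. -/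
open MeasureTheory Filter Topology

noncomputable section

abbrev EE (d : ℕ) : Type := EuclideanSpace ℝ (Fin d)

/-- `1 - cos (2π ⟪ξ,h⟫)` -/
def cc {d : ℕ} (ξ h : EE d) : ℝ := 1 - Real.cos (2 * Real.pi * inner ℝ ξ h)
/-- `sin (2π ⟪ξ,h⟫)` -/
def ss {d : ℕ} (ξ h : EE d) : ℝ := Real.sin (2 * Real.pi * inner ℝ ξ h)

open FourierTransform in
lemma fourier_shift {d : ℕ} (f : EE d → ℂ) (h ξ : EE d) :
    𝓕 (fun x => f (x - h)) ξ
      = Complex.exp (((-2 * Real.pi * inner ℝ ξ h : ℝ) : ℂ) * Complex.I) * 𝓕 f ξ := by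
  rw [Real.fourier_eq', Real.fourier_eq', ← integral_const_mul]
  conv_rhs => rw [← integral_sub_right_eq_self _ h]
  congr 1
  ext x
  simp only [smul_eq_mul]
  rw [← mul_assoc, ← Complex.exp_add]
  congr 2
  rw [inner_sub_left, real_inner_comm ξ h]
  push_cast
  ring

open FourierTransform in
lemma plancherel_diff {d : ℕ} (u : EE d → ℝ) (hu : ContDiff ℝ (⊤ : ℕ∞) u)
    (hc : HasCompactSupport u) :
    ∃ g : EE d → ℝ, Continuous g ∧ (Integrable fun ξ => (g ξ) ^ 2 * (1 + ‖ξ‖) ^ 2) ∧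
      ∀ h k : EE d, ∫ x, (u x - u (x - h)) * (u x - u (x - k)) =
        ∫ ξ, (g ξ) ^ 2 * (cc ξ h * cc ξ k + ss ξ h * ss ξ k) := by
  let U : EE d → ℂ := fun x => (u x : ℂ)
  have hU : ContDiff ℝ (⊤ : ℕ∞) U := Complex.ofRealCLM.contDiff.comp hu
  have hUc : HasCompactSupport U := hc.comp_left (g := fun r : ℝ => (r : ℂ)) (by simp)
  let S := hUc.toSchwartzMap hU
  have hsh : ∀ h : EE d, HasCompactSupport (fun x => U (x - h)) := fun h =>
    hUc.comp_homeomorph (Homeomorph.subRight h)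
  have hshs : ∀ h : EE d, ContDiff ℝ (⊤ : ℕ∞) (fun x => U (x - h)) := fun h =>
    hU.comp (contDiff_id.sub contDiff_const)
  let T : EE d → SchwartzMap (EE d) ℂ := fun h => S - (hsh h).toSchwartzMap (hshs h)
  have hT : ∀ h ξ, 𝓕 (T h) ξ
      = (1 - Complex.exp (((-2 * Real.pi * inner ℝ ξ h : ℝ) : ℂ) * Complex.I)) * 𝓕 S ξ := by
    intro h ξ
    have : 𝓕 (T h) = 𝓕 S - 𝓕 ((hsh h).toSchwartzMap (hshs h)) := by
      exact map_sub (SchwartzMap.fourierTransformCLM ℂ) _ _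
    rw [this, sub_mul, one_mul, sub_apply]
    congr 1
    exact fourier_shift U h ξ
  refine ⟨fun ξ => ‖𝓕 S ξ‖, (𝓕 S).continuous.norm, ?_, ?_⟩
  · obtain ⟨C, hC⟩ : ∃ C, ∀ ξ, ‖𝓕 S ξ‖ ≤ C := ⟨_, fun ξ => SchwartzMap.norm_le_seminorm ℝ (𝓕 S) ξ⟩
    have h1 := ((𝓕 S).integrable_pow_mul volume 0).const_mul (2 * C)
    have h2 := ((𝓕 S).integrable_pow_mul volume 2).const_mul (2 * C)
    refine (h1.add h2).mono' ?_ ?_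
    · have := (𝓕 S).continuous
      exact Continuous.aestronglyMeasurable (by fun_prop)
    · refine Eventually.of_forall fun ξ => ?_
      have h0 := norm_nonneg (𝓕 S ξ)
      rw [Real.norm_of_nonneg (by positivity)]
      simp only [Pi.add_apply, pow_zero, one_mul]
      have : (1 + ‖ξ‖)^2 ≤ 2 * (1 + ‖ξ‖^2) := by nlinarith [sq_nonneg (1 - ‖ξ‖)]
      calc ‖𝓕 S ξ‖ ^ 2 * (1 + ‖ξ‖) ^ 2 ≤ (C * ‖𝓕 S ξ‖) * (2 * (1 + ‖ξ‖^2)) := by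
            rw [sq ‖𝓕 S ξ‖]
            have := hC ξ
            have hC0 : 0 ≤ C := h0.trans this
            gcongr
        _ = _ := by ring
  · intro h k
    have key := SchwartzMap.integral_inner_fourier_fourier (T h) (T k)
    have e1 : ∀ x, inner ℂ (T h x) (T k x) = (((u x - u (x - h)) * (u x - u (x - k)) : ℝ) : ℂ) := by
      intro x
      have a1 : ∀ h, T h x = ((u x - u (x - h) : ℝ) : ℂ) := by
        intro h
        simp [T, S, U]
      rw [a1, a1]
      simp [mul_comm]
    simp_rw [e1] at key
    rw [integral_complex_ofReal] at key
    have key2 := congrArg Complex.re key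
    rw [Complex.ofReal_re] at key2
    rw [← key2]
    have hInt : Integrable (fun ξ => inner ℂ (𝓕 (T h) ξ) (𝓕 (T k) ξ)) := by
      obtain ⟨C, hC⟩ : ∃ C, ∀ ξ, ‖𝓕 (T h) ξ‖ ≤ C :=
        ⟨_, fun ξ => SchwartzMap.norm_le_seminorm ℝ (𝓕 (T h)) ξ⟩
      refine ((𝓕 (T k)).integrable.norm.const_mul C).mono' ?_ ?_
      · exact ((𝓕 (T h)).continuous.inner (𝓕 (T k)).continuous).aestronglyMeasurable
      · refine Eventually.of_forall fun ξ => (norm_inner_le_norm _ _).trans ?_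
        have := hC ξ
        gcongr
    have : (∫ ξ, inner ℂ (𝓕 (T h) ξ) (𝓕 (T k) ξ)).re
        = ∫ ξ, (inner ℂ (𝓕 (T h) ξ) (𝓕 (T k) ξ)).re := (integral_re hInt).symm
    rw [this]
    congr 1
    ext ξ
    rw [hT, hT]
    have a2 : ∀ h : EE d, (1 - Complex.exp (((-2 * Real.pi * inner ℝ ξ h : ℝ) : ℂ) * Complex.I))
        = (cc ξ h : ℂ) + (ss ξ h : ℂ) * Complex.I := by
      intro h
      rw [Complex.exp_mul_I, ← Complex.ofReal_cos, ← Complex.ofReal_sin, neg_mul, neg_mul,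
        Real.cos_neg, Real.sin_neg]
      simp only [cc, ss]
      push_cast
      ring
    rw [a2, a2, ← Complex.normSq_eq_norm_sq]
    simp [Complex.normSq_apply]
    ring

/-- The vector kernel `h / |h|^{d+s+1}`. -/
def KK (d : ℕ) (s : ℝ) (h : EE d) : EE d := (‖h‖ ^ ((d : ℝ) + s + 1))⁻¹ • h

lemma norm_KK (d : ℕ) (s : ℝ) (hs : 0 < s) (h : EE d) :
    ‖KK d s h‖ = ‖h‖ ^ (-((d : ℝ) + s)) := by
  rw [KK, norm_smul, norm_inv, Real.norm_of_nonneg (by positivity)]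
  rcases eq_or_ne h 0 with rfl | hh
  · have : (d : ℝ) + s ≠ 0 := by positivity
    rw [norm_zero, mul_zero, Real.zero_rpow (neg_ne_zero.2 this)]
  · have h0 : 0 < ‖h‖ := norm_pos_iff.2 hh
    rw [Real.rpow_add h0, Real.rpow_one, Real.rpow_neg h0.le]
    field_simp

lemma measurable_KK (d : ℕ) (s : ℝ) : Measurable (KK d s) := by
  unfold KK
  fun_prop

lemma integrable_weight_s16 (d : ℕ) (hd : 1 ≤ d) (n : ℕ) (q : ℝ) (hq : 0 < q) (hqn : q < n) :
    Integrable (fun h : EE d => (min 1 ‖h‖) ^ n * ‖h‖ ^ (-((d : ℝ) + q))) := by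
  have : Nonempty (Fin d) := ⟨⟨0, hd⟩⟩
  have : Nontrivial (EE d) := inferInstance
  have key := integrable_fun_norm_addHaar (E := EE d) volume
    (f := fun r : ℝ => (min 1 r) ^ n * r ^ (-((d : ℝ) + q)))
  refine key.2 ?_
  rw [finrank_euclideanSpace, Fintype.card_fin]
  have hpow : ∀ r : ℝ, 0 < r → r ^ (d - 1) * r ^ (-((d : ℝ) + q)) = r ^ (-q - 1) := by
    intro r hr
    rw [← Real.rpow_natCast, ← Real.rpow_add hr]
    congr 1
    push_cast [hd]
    ring
  rw [← Set.Ioc_union_Ioi_eq_Ioi (zero_le_one' ℝ)]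
  refine IntegrableOn.union ?_ ?_
  · have h1 : IntegrableOn (fun r : ℝ => r ^ ((n : ℝ) - q - 1)) (Set.Ioc 0 1) :=
      (intervalIntegrable_iff_integrableOn_Ioc_of_le zero_le_one).1
        (intervalIntegral.intervalIntegrable_rpow' (by linarith))
    refine h1.congr_fun (fun r hr => ?_) measurableSet_Ioc
    simp only [smul_eq_mul]
    rw [min_eq_right hr.2, mul_left_comm, hpow r hr.1, ← Real.rpow_natCast, ← Real.rpow_add hr.1]
    congr 1
    ring
  · have h1 : IntegrableOn (fun r : ℝ => r ^ (-q - 1)) (Set.Ioi 1) :=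
      integrableOn_Ioi_rpow_of_lt (by linarith) one_pos
    refine h1.congr_fun (fun r hr => ?_) measurableSet_Ioi
    simp only [smul_eq_mul]
    have hr' : (1 : ℝ) < r := hr
    rw [min_eq_left hr'.le, one_pow, one_mul, hpow r (by linarith)]

lemma integrable_KK_weight (d : ℕ) (hd : 1 ≤ d) (s : ℝ) (hs : s ∈ Set.Ioo (0 : ℝ) 1) :
    Integrable (fun h : EE d => (min 1 ‖h‖) * ‖KK d s h‖) := by
  have := integrable_weight_s16 d hd 1 s hs.1 (by simpa using hs.2)
  simpa [norm_KK d s hs.1] using this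

lemma abs_one_sub_cos_le (t : ℝ) : |1 - Real.cos t| ≤ |t| := by
  rw [abs_of_nonneg (by linarith [Real.cos_le_one t])]
  rcases le_or_gt |t| 2 with h | h
  · have := Real.one_sub_sq_div_two_le_cos (x := t)
    nlinarith [sq_abs t, abs_nonneg t]
  · linarith [Real.neg_one_le_cos t]

lemma arg_bound {d : ℕ} (ξ h : EE d) :
    min 2 |2 * Real.pi * inner ℝ ξ h| ≤ 2 * Real.pi * (1 + ‖ξ‖) * min 1 ‖h‖ := by
  have hpi := Real.pi_gt_three
  have hx := norm_nonneg ξ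
  have hh := norm_nonneg h
  have h1 : |2 * Real.pi * inner ℝ ξ h| ≤ 2 * Real.pi * (‖ξ‖ * ‖h‖) := by
    rw [abs_mul, abs_of_pos (by positivity : 0 < 2 * Real.pi)]
    gcongr
    exact abs_real_inner_le_norm ξ h
  rcases le_total ‖h‖ 1 with hle | hle
  · rw [min_eq_right hle]
    refine (min_le_right _ _).trans (h1.trans ?_)
    have : 0 ≤ Real.pi * ‖h‖ := by positivity
    nlinarith
  · rw [min_eq_left hle]
    refine (min_le_left _ _).trans ?_
    have : 0 ≤ Real.pi * ‖ξ‖ := by positivity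
    nlinarith

lemma cc_bound {d : ℕ} (ξ h : EE d) : |cc ξ h| ≤ 2 * Real.pi * (1 + ‖ξ‖) * min 1 ‖h‖ := by
  refine le_trans (le_min ?_ (abs_one_sub_cos_le _)) (arg_bound ξ h)
  rw [cc, abs_le]
  constructor <;>
  linarith [Real.neg_one_le_cos (2 * Real.pi * inner ℝ ξ h),
    Real.cos_le_one (2 * Real.pi * inner ℝ ξ h)]

lemma ss_bound {d : ℕ} (ξ h : EE d) : |ss ξ h| ≤ 2 * Real.pi * (1 + ‖ξ‖) * min 1 ‖h‖ := by
  refine le_trans (le_min ?_ Real.abs_sin_le_abs) (arg_bound ξ h)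
  exact (Real.abs_sin_le_one _).trans one_le_two

lemma diff_bound_s16 {d : ℕ} (u : EE d → ℝ) (hu : ContDiff ℝ (⊤ : ℕ∞) u)
    (hc : HasCompactSupport u) :
    ∃ (M : ℝ) (χ : EE d → ℝ), 0 ≤ M ∧ (∀ x, 0 ≤ χ x) ∧ Integrable χ ∧
      (∀ x h, |u x - u (x - h)| ≤ M * min 1 ‖h‖) ∧
      (∀ x h, |u x - u (x - h)| ≤ (χ x + χ (x - h)) * min 1 ‖h‖) := by
  obtain ⟨B, hB⟩ := hu.continuous.bounded_above_of_compact_support hc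
  obtain ⟨L, hL⟩ := (hu.of_le (by exact_mod_cast le_top)).lipschitzWith_of_hasCompactSupport hc one_ne_zero
  have hB0 : 0 ≤ B := (norm_nonneg _).trans (hB 0)
  set M : ℝ := 2 * B + L with hM
  have hL0 : (0 : ℝ) ≤ L := L.2
  have hM0 : 0 ≤ M := by positivity
  have bd : ∀ x h, |u x - u (x - h)| ≤ M * min 1 ‖h‖ := by
    intro x h
    have h1 : |u x - u (x - h)| ≤ 2 * B := by
      have a := hB x
      have b := hB (x - h)
      rw [Real.norm_eq_abs] at a b
      linarith [abs_sub (u x) (u (x - h))]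
    have h2 : |u x - u (x - h)| ≤ L * ‖h‖ := by
      have := hL.dist_le_mul x (x - h)
      rwa [Real.dist_eq, dist_eq_norm, sub_sub_cancel] at this
    have hh := norm_nonneg h
    rcases le_total ‖h‖ 1 with hle | hle
    · rw [min_eq_right hle]; nlinarith
    · rw [min_eq_left hle]; nlinarith
  have hχ0 : ∀ x, 0 ≤ (tsupport u).indicator (fun _ => M) x := fun x =>
    Set.indicator_nonneg (fun _ _ => hM0) x
  refine ⟨M, (tsupport u).indicator (fun _ => M), hM0, hχ0, ?_, bd, ?_⟩
  · rw [integrable_indicator_iff (isClosed_tsupport u).measurableSet]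
    exact integrableOn_const (hc.measure_lt_top.ne)
  · intro x h
    by_cases hx : x ∈ tsupport u
    · refine (bd x h).trans ?_
      have := hχ0 (x - h)
      have hm : 0 ≤ min 1 ‖h‖ := by positivity
      rw [Set.indicator_of_mem hx]
      gcongr
      linarith
    · by_cases hx' : x - h ∈ tsupport u
      · refine (bd x h).trans ?_
        have := hχ0 x
        have hm : 0 ≤ min 1 ‖h‖ := by positivity
        rw [Set.indicator_of_mem hx']
        gcongr
        linarith
      · rw [image_eq_zero_of_notMem_tsupport hx, image_eq_zero_of_notMem_tsupport hx', sub_zero,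
          abs_zero]
        have := hχ0 x
        have := hχ0 (x - h)
        positivity

lemma norm_sq_integral {d : ℕ} (F : EE d → EE d) (hF : Integrable F) :
    ‖∫ h, F h‖ ^ 2 = ∫ p : EE d × EE d, inner ℝ (F p.1) (F p.2) := by
  have hInt : Integrable (fun p : EE d × EE d => inner ℝ (F p.1) (F p.2))
      (volume.prod volume) := by
    refine (hF.norm.mul_prod hF.norm).mono' ?_ ?_
    · exact (hF.1.comp_fst).inner (hF.1.comp_snd)
    · exact Eventually.of_forall fun p => norm_inner_le_norm _ _
  rw [← real_inner_self_eq_norm_sq, Measure.volume_eq_prod, integral_prod _ hInt]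
  simp only
  rw [← integral_inner hF]
  congr 1
  ext x
  rw [integral_inner hF]
  rw [real_inner_comm]

lemma lemA {d : ℕ} {s : ℝ} (φ D : EE d → EE d → ℝ)
    (hK : Integrable (fun h : EE d => (min 1 ‖h‖) * ‖KK d s h‖))
    (hφ : Continuous (Function.uncurry φ))
    (hb : ∀ x, ∃ M : ℝ, ∀ h, |φ x h| ≤ M * min 1 ‖h‖)
    (hD : ∀ x h k, |φ x h * φ x k| ≤ D x h * min 1 ‖h‖ * min 1 ‖k‖)
    (hDi : Integrable (fun p : EE d × EE d => D p.1 p.2 * ((min 1 ‖p.2‖) * ‖KK d s p.2‖))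
      (volume.prod volume)) :
    (∀ x, Integrable (fun h => φ x h • KK d s h)) ∧
    Integrable (fun x => ‖∫ h, φ x h • KK d s h‖ ^ 2) ∧
    Integrable (fun p : EE d × EE d => inner ℝ (KK d s p.1) (KK d s p.2) *
      ∫ x, φ x p.1 * φ x p.2) ∧
    ∫ x, ‖∫ h, φ x h • KK d s h‖ ^ 2 = ∫ p : EE d × EE d, inner ℝ (KK d s p.1) (KK d s p.2) *
      ∫ x, φ x p.1 * φ x p.2 := by
  have hKm := measurable_KK d s
  have i1 : ∀ x, Integrable (fun h => φ x h • KK d s h) := by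
    intro x
    obtain ⟨M, hM⟩ := hb x
    refine (hK.const_mul M).mono' ?_ ?_
    · have : Continuous (φ x) := hφ.comp (Continuous.prodMk_right x)
      exact (this.measurable.smul hKm).aestronglyMeasurable
    · refine Eventually.of_forall fun h => ?_
      rw [norm_smul, Real.norm_eq_abs, ← mul_assoc]
      gcongr
      exact hM h
  have big : Integrable (fun q : EE d × (EE d × EE d) =>
      inner ℝ (KK d s q.2.1) (KK d s q.2.2) * (φ q.1 q.2.1 * φ q.1 q.2.2))
      (volume.prod (volume.prod volume)) := by
    have h1 := hDi.mul_prod hK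
    have h2 := (measurePreserving_prodAssoc (volume : Measure (EE d)) (volume : Measure (EE d))
      (volume : Measure (EE d))).symm MeasurableEquiv.prodAssoc
    have h3 := h2.integrable_comp_of_integrable h1
    refine h3.mono' ?_ ?_
    · have m1 : Measurable (fun q : EE d × (EE d × EE d) => φ q.1 q.2.1) :=
        hφ.measurable.comp (by fun_prop : Measurable fun q : EE d × (EE d × EE d) => (q.1, q.2.1))
      have m2 : Measurable (fun q : EE d × (EE d × EE d) => φ q.1 q.2.2) :=
        hφ.measurable.comp (by fun_prop : Measurable fun q : EE d × (EE d × EE d) => (q.1, q.2.2))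
      have m3 : Measurable (fun q : EE d × (EE d × EE d) => KK d s q.2.1) :=
        hKm.comp (by fun_prop)
      have m4 : Measurable (fun q : EE d × (EE d × EE d) => KK d s q.2.2) :=
        hKm.comp (by fun_prop)
      exact ((m3.inner m4).mul (m1.mul m2)).aestronglyMeasurable
    · refine Eventually.of_forall fun q => ?_
      obtain ⟨x, h, k⟩ := q
      simp only [Function.comp, MeasurableEquiv.prodAssoc, MeasurableEquiv.symm_mk,
        MeasurableEquiv.coe_mk, Equiv.prodAssoc_symm_apply]
      rw [norm_mul]
      calc ‖inner ℝ (KK d s h) (KK d s k)‖ * ‖φ x h * φ x k‖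
          ≤ (‖KK d s h‖ * ‖KK d s k‖) * (D x h * min 1 ‖h‖ * min 1 ‖k‖) := by
            gcongr
            · exact norm_inner_le_norm _ _
            · exact hD x h k
        _ = _ := by ring
  have pw : ∀ x, ‖∫ h, φ x h • KK d s h‖ ^ 2 = ∫ p : EE d × EE d,
      inner ℝ (KK d s p.1) (KK d s p.2) * (φ x p.1 * φ x p.2) := by
    intro x
    rw [norm_sq_integral _ (i1 x)]
    congr 1
    ext p
    rw [real_inner_smul_left, real_inner_smul_right]
    ring
  refine ⟨i1, ?_, ?_, ?_⟩
  · simp_rw [pw]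
    exact big.integral_prod_left
  · have := big.integral_prod_right
    simp only [integral_const_mul] at this
    exact this
  · simp_rw [pw, ← integral_const_mul]
    exact integral_integral_swap big

lemma lemB {d : ℕ} (w : EE d → ℝ) (hw0 : ∀ h, 0 ≤ w h) (hw : Measurable w)
    (φ D : EE d → EE d → ℝ)
    (hφ : Continuous (Function.uncurry φ))
    (hD : ∀ x h, φ x h ^ 2 ≤ D x h * (min 1 ‖h‖) ^ 2)
    (hDi : Integrable (fun p : EE d × EE d => D p.1 p.2 * ((min 1 ‖p.2‖) ^ 2 * w p.2))
      (volume.prod volume)) :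
    Integrable (fun h => w h * ∫ x, φ x h ^ 2) ∧
    Integrable (fun x => ∫ h, w h * φ x h ^ 2) ∧
    ∫ x, ∫ h, w h * φ x h ^ 2 = ∫ h, w h * ∫ x, φ x h ^ 2 := by
  have big : Integrable (fun q : EE d × EE d => w q.2 * φ q.1 q.2 ^ 2)
      (volume.prod volume) := by
    refine hDi.mono' ?_ ?_
    · have m1 : Measurable (fun q : EE d × EE d => φ q.1 q.2) := hφ.measurable
      have m2 : Measurable (fun q : EE d × EE d => w q.2) := hw.comp measurable_snd
      exact (m2.mul (m1.pow_const 2)).aestronglyMeasurable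
    · refine Eventually.of_forall fun q => ?_
      have h0 := hw0 q.2
      rw [Real.norm_of_nonneg (by positivity)]
      calc w q.2 * φ q.1 q.2 ^ 2 ≤ w q.2 * (D q.1 q.2 * (min 1 ‖q.2‖) ^ 2) := by
            gcongr
            exact hD q.1 q.2
        _ = _ := by ring
  refine ⟨?_, big.integral_prod_left, ?_⟩
  · have := big.integral_prod_right
    simp only [integral_const_mul] at this
    exact this
  · simp_rw [← integral_const_mul]
    exact integral_integral_swap big

/-- Symbol of the Gagliardo form. -/
def symA (d : ℕ) (s : ℝ) (ξ : EE d) : ℝ :=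
  ∫ h, ‖h‖ ^ (-((d : ℝ) + 2 * s)) * (cc ξ h ^ 2 + ss ξ h ^ 2)

/-- Symbol of the gradient form. -/
def symQ (d : ℕ) (s : ℝ) (ξ : EE d) : ℝ :=
  ‖∫ h, cc ξ h • KK d s h‖ ^ 2 + ‖∫ h, ss ξ h • KK d s h‖ ^ 2

lemma homog {d : ℕ} (s : ℝ) (hs : 0 < s) (F : EE d → ℝ) (h0 : F 0 = 0)
    (hL : ∀ (L : EE d ≃ₗᵢ[ℝ] EE d) ξ, F (L ξ) = F ξ)
    (ht : ∀ t : ℝ, 0 < t → ∀ ξ, F (t • ξ) = t ^ (2 * s) * F ξ)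
    (e : EE d) (he : ‖e‖ = 1) (ξ : EE d) : F ξ = F e * ‖ξ‖ ^ (2 * s) := by
  rcases eq_or_ne ξ 0 with rfl | hξ
  · rw [h0, norm_zero, Real.zero_rpow (by positivity), mul_zero]
  · have hn : 0 < ‖ξ‖ := norm_pos_iff.2 hξ
    have hnn : ‖‖ξ‖ • e‖ = ‖ξ‖ := by rw [norm_smul, he, mul_one, norm_norm]
    have := hL (Submodule.reflection (ℝ ∙ (‖ξ‖ • e - ξ))ᗮ) (‖ξ‖ • e)
    rw [Submodule.reflection_sub hnn] at this
    rw [this, ht _ hn, mul_comm]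

lemma cc_isom {d : ℕ} (L : EE d ≃ₗᵢ[ℝ] EE d) (ξ h : EE d) : cc (L ξ) (L h) = cc ξ h := by
  simp [cc]
lemma ss_isom {d : ℕ} (L : EE d ≃ₗᵢ[ℝ] EE d) (ξ h : EE d) : ss (L ξ) (L h) = ss ξ h := by
  simp [ss]
lemma cc_smul {d : ℕ} (t : ℝ) (ξ h : EE d) : cc (t • ξ) h = cc ξ (t • h) := by
  simp [cc, real_inner_smul_left, real_inner_smul_right]
lemma ss_smul {d : ℕ} (t : ℝ) (ξ h : EE d) : ss (t • ξ) h = ss ξ (t • h) := by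
  simp [ss, real_inner_smul_left, real_inner_smul_right]
lemma KK_isom {d : ℕ} (s : ℝ) (L : EE d ≃ₗᵢ[ℝ] EE d) (h : EE d) :
    KK d s (L h) = L (KK d s h) := by
  simp [KK]
lemma KK_smul {d : ℕ} (s : ℝ) (t : ℝ) (ht : 0 < t) (h : EE d) :
    KK d s h = t ^ ((d : ℝ) + s) • KK d s (t • h) := by
  rw [KK, KK, norm_smul, Real.norm_of_nonneg ht.le, smul_smul, smul_smul,
    Real.mul_rpow ht.le (norm_nonneg h), Real.rpow_add ht _ 1, Real.rpow_one]
  congr 1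
  have : 0 < t ^ ((d : ℝ) + s) := by positivity
  field_simp

lemma symA_eq {d : ℕ} (s : ℝ) (hs : 0 < s) (e : EE d) (he : ‖e‖ = 1) (ξ : EE d) :
    symA d s ξ = symA d s e * ‖ξ‖ ^ (2 * s) := by
  refine homog s hs (symA d s) ?_ ?_ ?_ e he ξ
  · simp [symA, cc, ss]
  · intro L ξ
    unfold symA
    rw [← (L.measurePreserving).integral_comp' (f := L.toMeasurableEquiv)]
    simp [cc_isom, ss_isom]
  · intro t ht ξ
    unfold symA
    have h1 := Measure.integral_comp_smul (volume : Measure (EE d))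
      (fun h => ‖h‖ ^ (-((d : ℝ) + 2 * s)) * (cc ξ h ^ 2 + ss ξ h ^ 2)) t
    have h2 : ∀ h : EE d, ‖h‖ ^ (-((d : ℝ) + 2 * s)) * (cc (t • ξ) h ^ 2 + ss (t • ξ) h ^ 2)
        = t ^ ((d : ℝ) + 2 * s) *
          (‖t • h‖ ^ (-((d : ℝ) + 2 * s)) * (cc ξ (t • h) ^ 2 + ss ξ (t • h) ^ 2)) := by
      intro h
      rw [cc_smul, ss_smul, norm_smul, Real.norm_of_nonneg ht.le,
        Real.mul_rpow ht.le (norm_nonneg h), Real.rpow_neg ht.le]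
      have : 0 < t ^ ((d : ℝ) + 2 * s) := by positivity
      field_simp
    simp_rw [h2]
    rw [integral_const_mul, h1, finrank_euclideanSpace, Fintype.card_fin, smul_eq_mul,
      abs_of_pos (by positivity), Real.rpow_add ht, Real.rpow_natCast]
    have : 0 < t ^ d := by positivity
    field_simp

lemma symQ_eq {d : ℕ} (s : ℝ) (hs : 0 < s) (e : EE d) (he : ‖e‖ = 1) (ξ : EE d) :
    symQ d s ξ = symQ d s e * ‖ξ‖ ^ (2 * s) := by
  refine homog s hs (symQ d s) ?_ ?_ ?_ e he ξ
  · simp [symQ, cc, ss]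
  · intro L ξ
    have gen : ∀ f : EE d → EE d → ℝ, (∀ ξ h, f (L ξ) (L h) = f ξ h) →
        ‖∫ h, f (L ξ) h • KK d s h‖ = ‖∫ h, f ξ h • KK d s h‖ := by
      intro f hf
      rw [← (L.measurePreserving).integral_comp' (f := L.toMeasurableEquiv)]
      have : ∀ h, f (L ξ) (L.toMeasurableEquiv h) • KK d s (L.toMeasurableEquiv h)
          = L (f ξ h • KK d s h) := by
        intro h
        simp [hf, KK_isom]
      simp_rw [this]
      have h3 := L.toContinuousLinearEquiv.integral_comp_comm (μ := volume)
        (fun h => f ξ h • KK d s h)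
      have h4 : ∫ h, L (f ξ h • KK d s h) = L (∫ h, f ξ h • KK d s h) := h3
      rw [h4, L.norm_map]
    unfold symQ
    rw [gen cc (cc_isom L), gen ss (ss_isom L)]
  · intro t ht ξ
    have gen : ∀ f : EE d → EE d → ℝ, (∀ ξ h, f (t • ξ) h = f ξ (t • h)) →
        ‖∫ h, f (t • ξ) h • KK d s h‖ = t ^ s * ‖∫ h, f ξ h • KK d s h‖ := by
      intro f hf
      have h1 := Measure.integral_comp_smul (volume : Measure (EE d))
        (fun h => f ξ h • KK d s h) t
      have h2 : ∀ h : EE d, f (t • ξ) h • KK d s h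
          = t ^ ((d : ℝ) + s) • (f ξ (t • h) • KK d s (t • h)) := by
        intro h
        rw [hf, KK_smul s t ht h, smul_comm]
      simp_rw [h2]
      rw [integral_smul, h1, finrank_euclideanSpace, Fintype.card_fin, norm_smul, norm_smul,
        abs_of_pos (by positivity), Real.norm_of_nonneg (by positivity),
        Real.norm_of_nonneg (by positivity), Real.rpow_add ht, Real.rpow_natCast]
      have : 0 < t ^ d := by positivity
      field_simp
    unfold symQ
    rw [gen cc (cc_smul t), gen ss (ss_smul t), two_mul, Real.rpow_add ht]
    ring

lemma integrable_symA (d : ℕ) (hd : 1 ≤ d) (s : ℝ) (hs : s ∈ Set.Ioo (0 : ℝ) 1) (ξ : EE d) :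
    Integrable fun h : EE d => ‖h‖ ^ (-((d : ℝ) + 2 * s)) * (cc ξ h ^ 2 + ss ξ h ^ 2) := by
  have h1 := integrable_weight_s16 d hd 2 (2 * s) (by linarith [hs.1])
    (by push_cast; linarith [hs.2])
  refine (h1.const_mul (2 * (2 * Real.pi * (1 + ‖ξ‖)) ^ 2)).mono' ?_ ?_
  · unfold cc ss
    have : Measurable fun h : EE d => ‖h‖ ^ (-((d : ℝ) + 2 * s)) * 
      ((1 - Real.cos (2 * Real.pi * inner ℝ ξ h)) ^ 2 + (Real.sin (2 * Real.pi * inner ℝ ξ h)) ^ 2)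
        := by fun_prop
    exact this.aestronglyMeasurable
  · refine Eventually.of_forall fun h => ?_
    rw [Real.norm_of_nonneg (by positivity)]
    have a := pow_le_pow_left₀ (abs_nonneg _) (cc_bound ξ h) 2
    have b := pow_le_pow_left₀ (abs_nonneg _) (ss_bound ξ h) 2
    rw [sq_abs] at a b
    calc _ ≤ ‖h‖ ^ (-((d : ℝ) + 2 * s)) * ((2 * Real.pi * (1 + ‖ξ‖) * min 1 ‖h‖) ^ 2
          + (2 * Real.pi * (1 + ‖ξ‖) * min 1 ‖h‖) ^ 2) := by gcongr
      _ = _ := by ring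

lemma symA_pos (d : ℕ) (hd : 1 ≤ d) (s : ℝ) (hs : s ∈ Set.Ioo (0 : ℝ) 1) (e : EE d)
    (he : ‖e‖ = 1) : 0 < symA d s e := by
  unfold symA
  rw [integral_pos_iff_support_of_nonneg (fun h => by positivity) (integrable_symA d hd s hs e)]
  have hcont : Continuous (cc e) := by unfold cc; fun_prop
  have hopen : IsOpen ({h : EE d | h ≠ 0} ∩ {h | cc e h ≠ 0}) :=
    (isOpen_ne).inter (isOpen_ne_fun hcont continuous_const)
  refine lt_of_lt_of_le (hopen.measure_pos volume ⟨(1 / 2 : ℝ) • e, ?_, ?_⟩) (measure_mono ?_)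
  · have : e ≠ 0 := by rintro rfl; simp at he
    simpa using this
  · have : cc e ((1 / 2 : ℝ) • e) = 2 := by
      rw [cc, real_inner_smul_right, real_inner_self_eq_norm_sq, he]
      rw [show 2 * Real.pi * (1 / 2 * 1 ^ 2) = Real.pi by ring, Real.cos_pi]
      norm_num
    rw [Set.mem_ofPred_eq, this]
    norm_num
  · rintro h ⟨h1, h2⟩
    have h1' : 0 < ‖h‖ := norm_pos_iff.2 h1
    have h2' : 0 < cc e h ^ 2 := by
      have : cc e h ≠ 0 := h2
      positivity
    rw [Function.mem_support]
    positivity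

lemma integrable_chi {d : ℕ} (χ W : EE d → ℝ) (hχ : Integrable χ) (hW : Integrable W) :
    Integrable (fun p : EE d × EE d => (χ p.1 + χ (p.1 - p.2)) * W p.2)
      (volume.prod volume) := by
  have h1 := hχ.mul_prod hW
  have h2 := hW.convolution_integrand (ContinuousLinearMap.mul ℝ ℝ) hχ
  refine (h1.add h2).congr (Eventually.of_forall fun p => ?_)
  simp only [Pi.add_apply, ContinuousLinearMap.mul_apply']
  ring

/-- The core identity: both forms are multiples of the same quantity. -/
lemma core (d : ℕ) (hd : 1 ≤ d) (s : ℝ) (hs : s ∈ Set.Ioo (0 : ℝ) 1)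
    (e : EE d) (he : ‖e‖ = 1)
    (u : EE d → ℝ) (hu : ContDiff ℝ (⊤ : ℕ∞) u) (hc : HasCompactSupport u) :
    ∃ J : ℝ, (∀ x, Integrable (fun h => (u x - u (x - h)) • KK d s h)) ∧
      Integrable (fun x => ‖∫ h, (u x - u (x - h)) • KK d s h‖ ^ 2) ∧
      (∫ x, ‖∫ h, (u x - u (x - h)) • KK d s h‖ ^ 2) = symQ d s e * J ∧
      (∫ x, ∫ h, ‖h‖ ^ (-((d : ℝ) + 2 * s)) * (u x - u (x - h)) ^ 2) = symA d s e * J := by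
  obtain ⟨g, hg, hgi, hP⟩ := plancherel_diff u hu hc
  obtain ⟨M, χ, hM, hχ0, hχi, b1, b2⟩ := diff_bound_s16 u hu hc
  have hK := integrable_KK_weight d hd s hs
  have hW := integrable_weight_s16 d hd 2 (2 * s) (by linarith [hs.1])
    (by push_cast; linarith [hs.2])
  have hucont := hu.continuous
  have hφ : Continuous (Function.uncurry fun x h : EE d => u x - u (x - h)) := by
    simp only [Function.uncurry_def]
    fun_prop
  have hφ1 : Continuous (Function.uncurry fun ξ h : EE d => g ξ * cc ξ h) := by
    simp only [Function.uncurry_def, cc]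
    fun_prop
  have hφ2 : Continuous (Function.uncurry fun ξ h : EE d => g ξ * ss ξ h) := by
    simp only [Function.uncurry_def, ss]
    fun_prop
  have hpi := Real.pi_pos
  -- physical side
  have dA := lemA (s := s) (fun x h : EE d => u x - u (x - h)) (fun x h => M * (χ x + χ (x - h))) hK hφ
    (fun x => ⟨M, b1 x⟩)
    (by
      intro x h k
      rw [abs_mul]
      have h1 := b2 x h
      have h2 := b1 x k
      have := hχ0 x
      have := hχ0 (x - h)
      calc _ ≤ ((χ x + χ (x - h)) * min 1 ‖h‖) * (M * min 1 ‖k‖) := by gcongr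
        _ = _ := by ring)
    (by
      refine ((integrable_chi χ _ hχi hK).const_mul M).congr (Eventually.of_forall fun p => ?_)
      simp only
      ring)
  have dB := lemB (fun h : EE d => ‖h‖ ^ (-((d : ℝ) + 2 * s))) (fun h => by positivity)
    (by fun_prop) (fun x h : EE d => u x - u (x - h)) (fun x h => M * (χ x + χ (x - h))) hφ
    (by
      intro x h
      have h1 := b2 x h
      have h2 := b1 x h
      have := hχ0 x
      have := hχ0 (x - h)
      calc (u x - u (x - h)) ^ 2 = |u x - u (x - h)| * |u x - u (x - h)| := by
            rw [← sq, sq_abs]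
        _ ≤ ((χ x + χ (x - h)) * min 1 ‖h‖) * (M * min 1 ‖h‖) := by gcongr
        _ = _ := by ring)
    (by
      refine ((integrable_chi χ _ hχi hW).const_mul M).congr (Eventually.of_forall fun p => ?_)
      simp only
      ring)
  -- Fourier side
  have four : ∀ f : EE d → EE d → ℝ,
      (∀ ξ h, |f ξ h| ≤ 2 * Real.pi * (1 + ‖ξ‖) * min 1 ‖h‖) →
      ∀ ξ h k, |g ξ * f ξ h * (g ξ * f ξ k)| ≤
        ((g ξ) ^ 2 * (1 + ‖ξ‖) ^ 2 * (2 * Real.pi) ^ 2) * min 1 ‖h‖ * min 1 ‖k‖ := by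
    intro f hf ξ h k
    have h1 := hf ξ h
    have h2 := hf ξ k
    calc |g ξ * f ξ h * (g ξ * f ξ k)| = |g ξ| ^ 2 * (|f ξ h| * |f ξ k|) := by
          simp only [abs_mul]; ring
      _ ≤ |g ξ| ^ 2 * ((2 * Real.pi * (1 + ‖ξ‖) * min 1 ‖h‖) *
            (2 * Real.pi * (1 + ‖ξ‖) * min 1 ‖k‖)) := by gcongr
      _ = _ := by rw [sq_abs]; ring
  have fourb : ∀ f : EE d → EE d → ℝ,
      (∀ ξ h, |f ξ h| ≤ 2 * Real.pi * (1 + ‖ξ‖) * min 1 ‖h‖) →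
      ∀ ξ, ∃ M : ℝ, ∀ h, |g ξ * f ξ h| ≤ M * min 1 ‖h‖ := by
    intro f hf ξ
    refine ⟨|g ξ| * (2 * Real.pi * (1 + ‖ξ‖)), fun h => ?_⟩
    rw [abs_mul, mul_assoc]
    have := hf ξ h
    gcongr
  have four2 : ∀ f : EE d → EE d → ℝ,
      (∀ ξ h, |f ξ h| ≤ 2 * Real.pi * (1 + ‖ξ‖) * min 1 ‖h‖) →
      ∀ ξ h, (g ξ * f ξ h) ^ 2 ≤
        ((g ξ) ^ 2 * (1 + ‖ξ‖) ^ 2 * (2 * Real.pi) ^ 2) * (min 1 ‖h‖) ^ 2 := by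
    intro f hf ξ h
    have := (le_abs_self _).trans (four f hf ξ h h)
    calc _ = g ξ * f ξ h * (g ξ * f ξ h) := by ring
      _ ≤ _ := this
      _ = _ := by ring
  have hgi' := hgi.mul_const ((2 * Real.pi) ^ 2)
  have fA1 := lemA (s := s) (fun ξ h : EE d => g ξ * cc ξ h)
    (fun ξ _ => (g ξ) ^ 2 * (1 + ‖ξ‖) ^ 2 * (2 * Real.pi) ^ 2) hK hφ1
    (fourb cc cc_bound) (four cc cc_bound) (hgi'.mul_prod hK)
  have fA2 := lemA (s := s) (fun ξ h : EE d => g ξ * ss ξ h)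
    (fun ξ _ => (g ξ) ^ 2 * (1 + ‖ξ‖) ^ 2 * (2 * Real.pi) ^ 2) hK hφ2
    (fourb ss ss_bound) (four ss ss_bound) (hgi'.mul_prod hK)
  have fB1 := lemB (fun h : EE d => ‖h‖ ^ (-((d : ℝ) + 2 * s))) (fun h => by positivity)
    (by fun_prop) (fun ξ h : EE d => g ξ * cc ξ h)
    (fun ξ _ => (g ξ) ^ 2 * (1 + ‖ξ‖) ^ 2 * (2 * Real.pi) ^ 2) hφ1
    (four2 cc cc_bound) (hgi'.mul_prod hW)
  have fB2 := lemB (fun h : EE d => ‖h‖ ^ (-((d : ℝ) + 2 * s))) (fun h => by positivity)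
    (by fun_prop) (fun ξ h : EE d => g ξ * ss ξ h)
    (fun ξ _ => (g ξ) ^ 2 * (1 + ‖ξ‖) ^ 2 * (2 * Real.pi) ^ 2) hφ2
    (four2 ss ss_bound) (hgi'.mul_prod hW)
  -- splitting Plancherel
  have fint : ∀ f : EE d → EE d → ℝ, Continuous (Function.uncurry fun ξ h : EE d => g ξ * f ξ h) →
      (∀ ξ h, |f ξ h| ≤ 2 * Real.pi * (1 + ‖ξ‖) * min 1 ‖h‖) →
      ∀ h k, Integrable (fun ξ => g ξ * f ξ h * (g ξ * f ξ k)) := by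
    intro f hfc hf h k
    refine ((hgi'.mul_const (min 1 ‖h‖)).mul_const (min 1 ‖k‖)).mono' ?_ ?_
    · have c1 : Continuous (fun ξ => g ξ * f ξ h) := hfc.comp (Continuous.prodMk_left h)
      have c2 : Continuous (fun ξ => g ξ * f ξ k) := hfc.comp (Continuous.prodMk_left k)
      exact (c1.mul c2).aestronglyMeasurable
    · exact Eventually.of_forall fun ξ => four f hf ξ h k
  have hP' : ∀ h k : EE d, ∫ x, (u x - u (x - h)) * (u x - u (x - k)) =
      (∫ ξ, g ξ * cc ξ h * (g ξ * cc ξ k)) + ∫ ξ, g ξ * ss ξ h * (g ξ * ss ξ k) := by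
    intro h k
    rw [hP, ← integral_add (fint cc hφ1 cc_bound h k) (fint ss hφ2 ss_bound h k)]
    congr 1
    ext ξ
    ring
  refine ⟨∫ ξ, g ξ ^ 2 * ‖ξ‖ ^ (2 * s), dA.1, dA.2.1, ?_, ?_⟩
  · rw [dA.2.2.2]
    simp_rw [hP', mul_add]
    rw [integral_add fA1.2.2.1 fA2.2.2.1, ← fA1.2.2.2, ← fA2.2.2.2,
      ← integral_add fA1.2.1 fA2.2.1, ← integral_const_mul]
    congr 1
    ext ξ
    have : symQ d s e * (g ξ ^ 2 * ‖ξ‖ ^ (2 * s)) = g ξ ^ 2 * symQ d s ξ := by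
      rw [symQ_eq s hs.1 e he ξ]; ring
    rw [this, symQ]
    simp_rw [mul_smul, integral_smul, norm_smul, mul_pow, Real.norm_eq_abs, sq_abs]
    ring
  · rw [dB.2.2]
    have hP2 : ∀ h : EE d, ∫ x, (u x - u (x - h)) ^ 2 =
      (∫ ξ, (g ξ * cc ξ h) ^ 2) + ∫ ξ, (g ξ * ss ξ h) ^ 2 := by
      intro h
      simp_rw [sq]
      exact hP' h h
    simp_rw [hP2, mul_add]
    rw [integral_add fB1.1 fB2.1, ← fB1.2.2, ← fB2.2.2,
      ← integral_add fB1.2.1 fB2.2.1, ← integral_const_mul]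
    congr 1
    ext ξ
    have : symA d s e * (g ξ ^ 2 * ‖ξ‖ ^ (2 * s)) = g ξ ^ 2 * symA d s ξ := by
      rw [symA_eq s hs.1 e he ξ]; ring
    rw [this, symA, ← integral_const_mul]
    have i1 : Integrable fun h : EE d => ‖h‖ ^ (-((d : ℝ) + 2 * s)) * (g ξ * cc ξ h) ^ 2 := by
      refine ((integrable_symA d hd s hs ξ).const_mul (g ξ ^ 2)).mono' ?_ ?_
      · have c1 : Continuous (fun h => g ξ * cc ξ h) := hφ1.comp (Continuous.prodMk_right ξ)
        have m1 : Measurable fun h : EE d => ‖h‖ ^ (-((d : ℝ) + 2 * s)) := by fun_prop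
        exact (m1.mul (c1.measurable.pow_const 2)).aestronglyMeasurable
      · refine Eventually.of_forall fun h => ?_
        rw [Real.norm_of_nonneg (by positivity)]
        have : 0 ≤ g ξ ^ 2 * (‖h‖ ^ (-((d : ℝ) + 2 * s)) * ss ξ h ^ 2) := by positivity
        nlinarith
    have i2 : Integrable fun h : EE d => ‖h‖ ^ (-((d : ℝ) + 2 * s)) * (g ξ * ss ξ h) ^ 2 := by
      refine ((integrable_symA d hd s hs ξ).const_mul (g ξ ^ 2)).mono' ?_ ?_
      · have c1 : Continuous (fun h => g ξ * ss ξ h) := hφ2.comp (Continuous.prodMk_right ξ)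
        have m1 : Measurable fun h : EE d => ‖h‖ ^ (-((d : ℝ) + 2 * s)) := by fun_prop
        exact (m1.mul (c1.measurable.pow_const 2)).aestronglyMeasurable
      · refine Eventually.of_forall fun h => ?_
        rw [Real.norm_of_nonneg (by positivity)]
        have : 0 ≤ g ξ ^ 2 * (‖h‖ ^ (-((d : ℝ) + 2 * s)) * cc ξ h ^ 2) := by positivity
        nlinarith
    rw [← integral_add i1 i2]
    congr 1
    ext h
    ring

lemma symQ_pos (d : ℕ) (hd : 1 ≤ d) (s : ℝ) (hs : s ∈ Set.Ioo (0 : ℝ) 1) (e : EE d)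
    (he : ‖e‖ = 1) : 0 < symQ d s e := by
  have h0 : 0 ≤ symQ d s e := by unfold symQ; positivity
  refine lt_of_le_of_ne h0 fun hz => ?_
  let f : ContDiffBump (0 : EE d) := ⟨1, 2, one_pos, one_lt_two⟩
  obtain ⟨J, i1, i2, hJ, -⟩ := core d hd s hs e he f f.contDiff f.hasCompactSupport
  rw [← hz, zero_mul, integral_eq_zero_iff_of_nonneg (fun x => by positivity) i2] at hJ
  have hdense := Measure.dense_of_ae hJ
  have hopen : IsOpen {x : EE d | 2 < inner ℝ x e} :=
    isOpen_lt continuous_const (by fun_prop)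
  obtain ⟨x, hx, hx0⟩ := hdense.inter_open_nonempty _ hopen
    ⟨(3 : ℝ) • e, by
      simp only [Set.mem_ofPred_eq, real_inner_smul_left, real_inner_self_eq_norm_sq, he]
      norm_num⟩
  have hxe : 2 < inner ℝ x e := hx
  have hx0' : ∫ h, (f x - f (x - h)) • KK d s h = 0 := by
    have : ‖∫ h, (f x - f (x - h)) • KK d s h‖ ^ 2 = 0 := hx0
    simpa using this
  have hxn : 2 < ‖x‖ := by
    have := real_inner_le_norm x e
    rw [he, mul_one] at this
    linarith
  have hfx : f x = 0 := f.zero_of_le_dist (by rw [dist_zero_right]; exact hxn.le)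
  have hin : inner ℝ e (∫ h, (f x - f (x - h)) • KK d s h) = 0 := by rw [hx0', inner_zero_right]
  rw [← integral_inner (i1 x)] at hin
  have hii := (Integrable.const_inner (𝕜 := ℝ) e (i1 x)).neg
  have heq : (-fun h => inner ℝ e ((f x - f (x - h)) • KK d s h)) =
      fun h => f (x - h) * ((‖h‖ ^ ((d : ℝ) + s + 1))⁻¹ * inner ℝ e h) := by
    ext h
    simp only [Pi.neg_apply]
    rw [hfx, zero_sub, KK, real_inner_smul_right, real_inner_smul_right]
    ring
  have hpos : ∀ h, f (x - h) ≠ 0 → 0 < inner ℝ e h := by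
    intro h hh
    have h1 : ‖x - h‖ < 2 := by
      by_contra hcon
      exact hh (f.zero_of_le_dist (by rw [dist_zero_right]; exact not_lt.1 hcon))
    have h2 := real_inner_le_norm (x - h) e
    rw [he, mul_one, inner_sub_left] at h2
    rw [real_inner_comm]
    linarith
  rw [heq] at hii
  have hz2 : ∫ h, f (x - h) * ((‖h‖ ^ ((d : ℝ) + s + 1))⁻¹ * inner ℝ e h) = 0 := by
    rw [← heq]
    rw [integral_neg', hin, neg_zero]
  have hnn : 0 ≤ fun h => f (x - h) * ((‖h‖ ^ ((d : ℝ) + s + 1))⁻¹ * inner ℝ e h) := by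
    intro h
    simp only [Pi.zero_apply]
    by_cases hh : f (x - h) = 0
    · rw [hh, zero_mul]
    · have := hpos h hh
      have := f.nonneg' (x - h)
      positivity
  have hgt : 0 < ∫ h, f (x - h) * ((‖h‖ ^ ((d : ℝ) + s + 1))⁻¹ * inner ℝ e h) := by
    rw [integral_pos_iff_support_of_nonneg hnn hii]
    refine lt_of_lt_of_le (Metric.measure_ball_pos volume x (one_pos)) (measure_mono ?_)
    intro h hh
    have hd1 : dist (x - h) 0 < 2 := by
      rw [Metric.mem_ball, dist_comm, dist_eq_norm] at hh
      rw [dist_zero_right]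
      linarith
    have hf : 0 < f (x - h) := f.pos_of_mem_ball hd1
    have hp := hpos h hf.ne'
    have hn : 0 < ‖h‖ := by
      rw [norm_pos_iff]
      rintro rfl
      simp at hp
    rw [Function.mem_support]
    positivity
  exact hgt.ne' hz2

/-- The squared Gagliardo seminorm equals a dimensional constant times the squared
`L²` norm of the Riesz fractional gradient, for all `u ∈ C_c^∞(ℝ^d)`. -/
theorem stmt16 (d : ℕ) (hd : 1 ≤ d) (s : ℝ) (hs : s ∈ Set.Ioo (0 : ℝ) 1) :
    ∃ C : ℝ, 0 < C ∧
      ∀ u : EuclideanSpace ℝ (Fin d) → ℝ,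
        ContDiff ℝ (⊤ : ℕ∞) u → HasCompactSupport u →
        ∫ x, ∫ y, (u x - u y) ^ 2 / ‖x - y‖ ^ ((d : ℝ) + 2 * s) =
          C * ∫ x, ‖fracGrad d s u x‖ ^ 2 := by
  let e : EE d := EuclideanSpace.single ⟨0, hd⟩ 1
  have he : ‖e‖ = 1 := by simp [e]
  have hA := symA_pos d hd s hs e he
  have hQ := symQ_pos d hd s hs e he
  have hs0 := hs.1
  have hs1 : 0 < 1 - s := by linarith [hs.2]
  have hmu : 0 < muS d s := by
    unfold muS
    have h1 : 0 < Real.Gamma (((d : ℝ) + s + 1) / 2) := Real.Gamma_pos_of_pos (by positivity)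
    have h2 : 0 < Real.Gamma ((1 - s) / 2) := Real.Gamma_pos_of_pos (by positivity)
    have := Real.pi_pos
    positivity
  refine ⟨symA d s e / (muS d s ^ 2 * symQ d s e), by positivity, fun u hu hc => ?_⟩
  obtain ⟨J, -, -, hJ1, hJ2⟩ := core d hd s hs e he u hu hc
  have hG : ∀ x, fracGrad d s u x = muS d s • ∫ h, (u x - u (x - h)) • KK d s h := by
    intro x
    unfold fracGrad
    rw [← integral_sub_left_eq_self _ volume x]
    congr 2
    ext1 h
    rw [sub_sub_cancel, KK, smul_comm]
  have hL : ∀ x, ∫ y, (u x - u y) ^ 2 / ‖x - y‖ ^ ((d : ℝ) + 2 * s)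
      = ∫ h, ‖h‖ ^ (-((d : ℝ) + 2 * s)) * (u x - u (x - h)) ^ 2 := by
    intro x
    rw [← integral_sub_left_eq_self _ volume x]
    congr 1
    ext1 h
    rw [sub_sub_cancel, Real.rpow_neg (norm_nonneg h), div_eq_inv_mul]
  simp_rw [hL, hG, norm_smul, mul_pow, Real.norm_eq_abs, sq_abs]
  rw [integral_const_mul, hJ1, hJ2]
  field_simp

end
end
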